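/- Let G be a finite group with o(G) < 211/60 (where 211/60 = o(A_5)). Then G is solvable. -/

import Mathlib

/-- The average element order `o(G) = ψ(G)/|G|` of a finite group `G`,
where `ψ(G) = ∑_{x ∈ G} |x|` is the sum of the orders of all elements of `G`. -/
noncomputable def avgOrder (G : Type*) [Group G] [Fintype G] : ℚ :=
  (∑ x : G, (orderOf x : ℚ)) / (Fintype.card G : ℚ)

namespace AvgOrd

/-- exhaustive search over progression-free subsets -/
def apChk : ℕ → List ℕ → Bool
  | 0, l => decide (l.length ≤ 8)
  | n + 1, l =>
    (decide (l.length + (n + 1) ≤ 8)) ||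
    (apChk n l && ((l.any fun b => l.any fun c => n + c == 2 * b) || apChk n (n :: l)))

theorem apChk_19 : apChk 19 [] = true := by decide +kernel

theorem apChk_sound (J : Finset ℕ)
    (hJ : ∀ i ∈ J, ∀ j ∈ J, ∀ k ∈ J, i < j → i + k ≠ 2 * j) :
    ∀ (n : ℕ) (l : List ℕ), apChk n l = true → l.Nodup →
      (∀ x, x ∈ l ↔ x ∈ J ∧ n ≤ x) → J.card ≤ 8 := by
  intro n
  induction n with
  | zero =>
    intro l h hn hl
    have : J = l.toFinset := by ext x; simp [hl]
    rw [this, List.toFinset_card_of_nodup hn]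
    simpa [apChk] using h
  | succ n ih =>
    intro l h hn hl
    simp only [apChk, Bool.or_eq_true, Bool.and_eq_true, decide_eq_true_eq] at h
    rcases h with h | ⟨h1, h2⟩
    · have : J ⊆ l.toFinset ∪ Finset.range (n + 1) := by
        intro x hx
        simp only [Finset.mem_union, List.mem_toFinset, Finset.mem_range, hl]
        by_cases hxn : n + 1 ≤ x
        · exact Or.inl ⟨hx, hxn⟩
        · right; omega
      calc J.card ≤ _ := Finset.card_le_card this
        _ ≤ l.toFinset.card + (Finset.range (n + 1)).card := Finset.card_union_le _ _
        _ ≤ l.length + (n + 1) := by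
          rw [Finset.card_range]; gcongr; exact List.toFinset_card_le l
        _ ≤ 8 := h
    · by_cases hnJ : n ∈ J
      · rcases h2 with h2 | h2
        · exfalso
          simp only [List.any_eq_true, beq_iff_eq] at h2
          obtain ⟨b, hb, c, hc, hbc⟩ := h2
          rw [hl] at hb hc
          exact hJ n hnJ b hb.1 c hc.1 (by omega) hbc
        · apply ih _ h2
          · rw [List.nodup_cons]
            refine ⟨?_, hn⟩
            rw [hl]; omega
          · intro x
            rw [List.mem_cons, hl]
            constructor
            · rintro (rfl | ⟨a, b⟩)
              · exact ⟨hnJ, le_rfl⟩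
              · exact ⟨a, by omega⟩
            · rintro ⟨a, b⟩
              by_cases hx : x = n
              · exact Or.inl hx
              · right; exact ⟨a, by omega⟩
      · apply ih _ h1 hn
        intro x
        rw [hl]
        constructor
        · rintro ⟨a, b⟩; exact ⟨a, by omega⟩
        · rintro ⟨a, b⟩
          refine ⟨a, ?_⟩
          rcases Nat.lt_or_ge n x with h | h
          · exact h
          · have : x = n := by omega
            exact absurd (this ▸ a) hnJ

theorem ap19 (J : Finset ℕ)
    (hJ : ∀ i ∈ J, ∀ j ∈ J, ∀ k ∈ J, i < j → i + k ≠ 2 * j)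
    (h19 : ∀ x ∈ J, x < 19) : J.card ≤ 8 := by
  have key : ∀ n, apChk n [] = true → n = 19 → J.card ≤ 8 := by
    intro n hn h
    refine apChk_sound J hJ n [] hn List.nodup_nil ?_
    intro x
    have := h19 x
    simp only [List.not_mem_nil, false_iff, not_and]
    intro hx; have := this hx; omega
  exact key 19 apChk_19 rfl

/-- The progression-free condition in `ZMod p`. -/
def APFree {p : ℕ} (S : Finset (ZMod p)) : Prop :=
  ∀ k d : ZMod p, d ≠ 0 → k - d ∈ S → k ∈ S → k + d ∈ S → False

theorem apfree_large {p : ℕ} [Fact p.Prime] (hp : 11 ≤ p) (S : Finset (ZMod p)) (hS : APFree S) :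
    19 * S.card ≤ 8 * p := by
  classical
  have key : ∀ a : ZMod p, ((Finset.range 19).filter fun j : ℕ => a + (j : ZMod p) ∈ S).card ≤ 8 := by
    intro a
    generalize h19 : 19 = N
    have h19' : ∀ x ∈ ((Finset.range N).filter fun j : ℕ => a + (j : ZMod p) ∈ S), x < N := by
      intro x hx
      exact Finset.mem_range.mp (Finset.mem_filter.mp hx).1
    refine ap19 _ ?_ (fun x hx => h19 ▸ h19' x hx)
    · intro i hi j hj k hk hij hik
      simp only [Finset.mem_filter, Finset.mem_range] at hi hj hk
      have hd : ((j - i : ℕ) : ZMod p) ≠ 0 := by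
        rw [Ne, ZMod.natCast_eq_zero_iff]
        intro h
        have := Nat.le_of_dvd (by omega) h
        omega
      refine hS (a + j) ((j - i : ℕ) : ZMod p) hd ?_ hj.2 ?_
      · have : a + (j : ZMod p) - ((j - i : ℕ) : ZMod p) = a + i := by
          rw [Nat.cast_sub hij.le]; ring
        rw [this]; exact hi.2
      · have hk' : (k : ZMod p) = 2 * j - i := by
          have : (i : ZMod p) + k = 2 * j := by exact_mod_cast congrArg (Nat.cast (R := ZMod p)) hik
          linear_combination this
        have : a + (j : ZMod p) + ((j - i : ℕ) : ZMod p) = a + k := by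
          rw [Nat.cast_sub hij.le, hk']; ring
        rw [this]; exact hk.2
  have h1 : ∑ a : ZMod p, ((Finset.range 19).filter fun j : ℕ => a + (j : ZMod p) ∈ S).card
      = 19 * S.card := by
    simp_rw [Finset.card_filter]
    rw [Finset.sum_comm]
    have h2 : ∀ j ∈ Finset.range 19,
        (∑ a : ZMod p, if a + (j : ZMod p) ∈ S then 1 else 0) = S.card := by
      intro j _
      rw [← Finset.card_filter]
      refine Finset.card_bij (fun a _ => a + (j : ZMod p)) (fun a ha => (Finset.mem_filter.mp ha).2)
        (fun a _ b _ h => add_right_cancel h)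
        (fun b hb => ⟨b - j, by simpa using hb, by ring⟩)
    rw [Finset.sum_congr rfl h2]; simp
  rw [← h1]
  calc _ ≤ ∑ a : ZMod p, 8 := Finset.sum_le_sum fun a _ => key a
    _ = 8 * p := by simp [ZMod.card, mul_comm]

theorem apfree_five (S : Finset (ZMod 5)) (hS : APFree S) : S.card ≤ 2 := by
  revert S; unfold APFree; decide +kernel

theorem apfree_seven (S : Finset (ZMod 7)) (hS : APFree S) : S.card ≤ 3 := by
  revert S; unfold APFree; decide +kernel

/-- The bound used for progression-free sets. -/
def rr (p : ℕ) : ℕ := if p = 5 then 2 else if p = 7 then 3 else 8 * p / 19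

theorem apfree_rr {p : ℕ} [hp : Fact p.Prime] (h5 : 5 ≤ p) (S : Finset (ZMod p)) (hS : APFree S) :
    S.card ≤ rr p := by
  by_cases h : p = 5
  · subst h; simpa [rr] using apfree_five S hS
  by_cases h' : p = 7
  · subst h'; simpa [rr] using apfree_seven S hS
  have : 11 ≤ p := by
    by_contra hlt
    have := hp.out
    interval_cases p <;> first | omega | (revert this; norm_num)
  have := apfree_large this S hS
  simp only [rr, h, h', if_false]
  omega

theorem two_rr_lt {p : ℕ} (h5 : 5 ≤ p) : 2 * rr p < p := by
  unfold rr; split_ifs <;> omega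

theorem two_le_rr {p : ℕ} (h5 : 5 ≤ p) : 2 ≤ rr p := by
  unfold rr; split_ifs <;> omega

end AvgOrd

namespace AvgOrd

theorem plane_lemma {p : ℕ} [hp : Fact p.Prime] {r : ℕ} (hr : 2 * r < p)
    (Z : Finset (ZMod p × ZMod p))
    (hline : ∀ m β : ZMod p, (∀ s, (s, m * s + β) ∈ Z) ∨
      (Finset.univ.filter fun s : ZMod p => (s, m * s + β) ∈ Z).card ≤ r)
    (hcol : ∀ s : ZMod p, (∀ t, (s, t) ∈ Z) ∨
      (Finset.univ.filter fun t : ZMod p => (s, t) ∈ Z).card ≤ r)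
    (huniq : ∀ s s' : ZMod p, (∀ t, (s, t) ∈ Z) → (∀ t, (s', t) ∈ Z) → s = s') :
    Z.card ≤ r * p := by
  classical
  by_contra hlt
  push Not at hlt
  have hp2 : 2 ≤ p := hp.out.two_le
  have hfull : ∀ m : ZMod p, ∃ β, ∀ s, (s, m * s + β) ∈ Z := by
    intro m
    by_contra hno
    push Not at hno
    have h1 : Z.card = ∑ β : ZMod p,
        (Finset.univ.filter fun s : ZMod p => (s, m * s + β) ∈ Z).card := by
      rw [← Finset.card_sigma]
      refine Finset.card_bij' (fun z _ => (⟨z.2 - m * z.1, z.1⟩ : (_ : ZMod p) × ZMod p))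
        (fun w _ => (w.2, m * w.2 + w.1)) ?_ ?_ ?_ ?_
      · rintro ⟨s, t⟩ h; simpa using h
      · rintro ⟨β, s⟩ h; simpa using h
      · rintro ⟨s, t⟩ h; simp
      · rintro ⟨β, s⟩ h; simp
    have h2 : Z.card ≤ ∑ β : ZMod p, r := by
      rw [h1]
      refine Finset.sum_le_sum fun β _ => ?_
      rcases hline m β with h | h
      · obtain ⟨s, hs⟩ := hno β
        exact absurd (h s) hs
      · exact h
    simp [ZMod.card] at h2
    rw [mul_comm] at h2
    omega
  choose β hβ using hfull
  -- the pair count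
  let N : ZMod p → ZMod p → ℕ := fun s t => (Finset.univ.filter fun m => m * s + β m = t).card
  have hNsum : ∀ s, ∑ t, N s t = p := by
    intro s
    have := Finset.card_eq_sum_card_fiberwise (f := fun m : ZMod p => m * s + β m)
      (s := Finset.univ) (t := Finset.univ) (fun _ _ => Finset.mem_coe.mpr (Finset.mem_univ _))
    rw [Finset.card_univ, ZMod.card] at this
    exact this.symm
  have hN2 : ∀ s, ∑ t, N s t ^ 2 =
      (Finset.univ.filter fun z : ZMod p × ZMod p => z.1 * s + β z.1 = z.2 * s + β z.2).card := by
    intro s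
    rw [Finset.card_eq_sum_card_fiberwise (f := fun z : ZMod p × ZMod p => z.1 * s + β z.1)
      (t := Finset.univ) (fun _ _ => Finset.mem_coe.mpr (Finset.mem_univ _))]
    refine Finset.sum_congr rfl fun t _ => ?_
    rw [sq, ← Finset.card_product]
    congr 1
    ext ⟨m, m'⟩
    simp only [Finset.mem_product, Finset.mem_filter, Finset.mem_univ, true_and]
    constructor
    · rintro ⟨a, b⟩; exact ⟨a.trans b.symm, a⟩
    · rintro ⟨a, b⟩; exact ⟨b, a.symm.trans b⟩
  have hTot : ∑ s, ∑ t, N s t ^ 2 ≤ 2 * p ^ 2 - p := by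
    have e1 : ∑ s, ∑ t, N s t ^ 2 = ∑ z : ZMod p × ZMod p,
        (Finset.univ.filter fun s : ZMod p => z.1 * s + β z.1 = z.2 * s + β z.2).card := by
      simp_rw [hN2, Finset.card_filter]
      rw [Finset.sum_comm]
    have e2 : ∀ z : ZMod p × ZMod p,
        (Finset.univ.filter fun s : ZMod p => z.1 * s + β z.1 = z.2 * s + β z.2).card
          ≤ 1 + if z.1 = z.2 then (p - 1) else 0 := by
      rintro ⟨m, m'⟩
      by_cases h : m = m'
      · simp only [h, if_true]
        refine (Finset.card_le_univ _).trans ?_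
        rw [ZMod.card]; omega
      · simp only [h, if_false]
        rw [add_zero, Finset.card_le_one]
        intro a ha b hb
        simp only [Finset.mem_filter, Finset.mem_univ, true_and] at ha hb
        have : (m - m') * (a - b) = 0 := by linear_combination ha - hb
        rcases mul_eq_zero.mp this with h' | h'
        · exact absurd (sub_eq_zero.mp h') h
        · exact sub_eq_zero.mp h'
    rw [e1]
    refine (Finset.sum_le_sum fun z _ => e2 z).trans ?_
    rw [Finset.sum_add_distrib, Fintype.sum_prod_type, Fintype.sum_prod_type]
    simp only [Finset.sum_const, Finset.card_univ, ZMod.card,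
      Finset.sum_ite_eq, Finset.mem_univ, if_true, smul_eq_mul]
    obtain ⟨k, rfl⟩ := Nat.exists_eq_add_of_le hp2
    have : 2 + k - 1 = k + 1 := by omega
    rw [this]
    apply Nat.le_sub_of_add_le
    nlinarith
  have hlow : ∀ s, (¬ ∀ t, (s, t) ∈ Z) → 2 * p + 1 ≤ ∑ t, N s t ^ 2 := by
    intro s hs
    have hc : (Finset.univ.filter fun t : ZMod p => (s, t) ∈ Z).card ≤ r :=
      (hcol s).resolve_left hs
    have hsup : ∀ t, (s, t) ∉ Z → N s t = 0 := by
      intro t ht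
      rw [Finset.card_eq_zero, Finset.filter_eq_empty_iff]
      intro m _ hm
      exact ht (hm ▸ hβ m s)
    have hs1 : ∑ t ∈ (Finset.univ.filter fun t : ZMod p => (s, t) ∈ Z), N s t = p := by
      refine Eq.trans ?_ (hNsum s)
      apply Finset.sum_subset (Finset.subset_univ _)
      intro t _ ht
      apply hsup
      simpa using ht
    have cs := sq_sum_le_card_mul_sum_sq (s := (Finset.univ.filter fun t : ZMod p => (s, t) ∈ Z))
      (f := fun t => N s t)
    rw [hs1] at cs
    have h3 : ∑ t ∈ (Finset.univ.filter fun t : ZMod p => (s, t) ∈ Z), N s t ^ 2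
        ≤ ∑ t, N s t ^ 2 :=
      Finset.sum_le_sum_of_subset (Finset.subset_univ _)
    by_contra hcon
    have h4 : ∑ t ∈ (Finset.univ.filter fun t : ZMod p => (s, t) ∈ Z), N s t ^ 2 ≤ 2 * p := by
      omega
    have : p ^ 2 ≤ r * (2 * p) := cs.trans (Nat.mul_le_mul hc h4)
    nlinarith
  have hlow' : ∀ s, p ≤ ∑ t, N s t ^ 2 := by
    intro s
    calc p = ∑ t, N s t := (hNsum s).symm
      _ ≤ _ := Finset.sum_le_sum fun t _ => Nat.le_self_pow two_ne_zero _
  have hfin : 2 * p ^ 2 - 1 ≤ ∑ s, ∑ t, N s t ^ 2 := by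
    by_cases hex : ∃ s, ∀ t, (s, t) ∈ Z
    · obtain ⟨s0, hs0⟩ := hex
      rw [← Finset.add_sum_erase _ _ (Finset.mem_univ s0)]
      have : ∑ s ∈ Finset.univ.erase s0, (2 * p + 1) ≤
          ∑ s ∈ Finset.univ.erase s0, ∑ t, N s t ^ 2 := by
        refine Finset.sum_le_sum fun s hs => hlow s ?_
        intro h
        exact (Finset.mem_erase.mp hs).1 (huniq s s0 h hs0)
      rw [Finset.sum_const, Finset.card_erase_of_mem (Finset.mem_univ _), Finset.card_univ,
        ZMod.card, smul_eq_mul] at this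
      have h0 := hlow' s0
      obtain ⟨k, rfl⟩ := Nat.exists_eq_add_of_le hp2
      have e : 2 + k - 1 = k + 1 := by omega
      rw [e] at this
      apply Nat.sub_le_of_le_add
      nlinarith
    · push Not at hex
      have : ∑ s : ZMod p, (2 * p + 1) ≤ ∑ s, ∑ t, N s t ^ 2 := by
        refine Finset.sum_le_sum fun s _ => hlow s ?_
        push Not; exact hex s
      rw [Finset.sum_const, Finset.card_univ, ZMod.card, smul_eq_mul] at this
      apply Nat.sub_le_of_le_add
      nlinarith
  have : p ≤ 2 * p ^ 2 := by nlinarith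
  omega

end AvgOrd

namespace AvgOrd

section grp
variable {G : Type*} [Group G]

theorem cube_expand {e x : G} (hx : x ^ 3 = 1) :
    (e * x) ^ 3 = e * (x⁻¹ * x⁻¹ * e * x * x) * (x⁻¹ * e * x) := by
  have h1 : x * x = x⁻¹ := by
    rw [eq_inv_iff_mul_eq_one, ← hx, pow_succ, pow_two]
  have h2 : x⁻¹ * x⁻¹ = x := by rw [← mul_inv_rev, h1, inv_inv]
  have h3 : x⁻¹ * x⁻¹ * e * x * x = x * e * x⁻¹ := by rw [h2, mul_assoc (x * e), h1]
  rw [h3]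
  calc (e * x) ^ 3 = e * x * (e * x) * (e * x) := by rw [pow_succ, pow_two]
    _ = e * (x * e * x⁻¹) * (x * x * e * x) := by simp only [mul_assoc, inv_mul_cancel_left]
    _ = _ := by rw [h1]

theorem good_of_cubes {e x : G} (hx : x ^ 3 = 1) (h1 : (e * x) ^ 3 = 1) (h2 : (e⁻¹ * x) ^ 3 = 1) :
    Commute e (x⁻¹ * e * x) ∧ x⁻¹ * (x⁻¹ * e * x) * x = (x⁻¹ * e * x * e)⁻¹ := by
  rw [cube_expand hx] at h1 h2
  have hv : x⁻¹ * (x⁻¹ * e * x) * x = x⁻¹ * x⁻¹ * e * x * x := by simp only [mul_assoc]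
  rw [hv]
  have hv' : x⁻¹ * x⁻¹ * e⁻¹ * x * x = (x⁻¹ * x⁻¹ * e * x * x)⁻¹ := by
    simp only [mul_inv_rev, inv_inv, mul_assoc]
  have hu' : x⁻¹ * e⁻¹ * x = (x⁻¹ * e * x)⁻¹ := by
    simp only [mul_inv_rev, inv_inv, mul_assoc]
  rw [hv', hu'] at h2
  generalize x⁻¹ * x⁻¹ * e * x * x = v at *
  generalize x⁻¹ * e * x = u at *
  have a1 : v = e⁻¹ * u⁻¹ := by
    rw [mul_assoc] at h1
    rw [eq_inv_mul_iff_mul_eq, eq_inv_iff_mul_eq_one, mul_assoc]; exact h1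
  have a2 : u * v * e = 1 := by
    have := congrArg (·⁻¹) h2
    simpa [mul_assoc] using this
  have a3 : v = u⁻¹ * e⁻¹ := by
    rw [eq_inv_mul_iff_mul_eq, eq_inv_iff_mul_eq_one]; exact a2
  have a4 : u * e = e * u := by
    have : e⁻¹ * u⁻¹ = u⁻¹ * e⁻¹ := a1.symm.trans a3
    have := congrArg (·⁻¹) this
    simpa using this
  refine ⟨a4.symm, ?_⟩
  rw [mul_inv_rev]; exact a1

theorem cube_of_good {e x : G} (hx : x ^ 3 = 1) (hc : Commute e (x⁻¹ * e * x))
    (hv : x⁻¹ * (x⁻¹ * e * x) * x = (x⁻¹ * e * x * e)⁻¹) (n : ℕ) : (e ^ n * x) ^ 3 = 1 := by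
  rw [cube_expand hx]
  have h1 : x⁻¹ * e ^ n * x = (x⁻¹ * e * x) ^ n := by
    have := (conj_pow (i := n) (a := x⁻¹) (b := e)).symm
    simpa using this
  have h2 : x⁻¹ * x⁻¹ * e ^ n * x * x = (x⁻¹ * (x⁻¹ * e * x) * x) ^ n := by
    have h3 := (conj_pow (i := n) (a := x⁻¹) (b := x⁻¹ * e * x))
    simp only [inv_inv] at h3
    rw [h3, ← h1]; simp only [mul_assoc]
  rw [h1, h2, hv]
  generalize x⁻¹ * e * x = u at *
  rw [inv_pow, (hc.symm).mul_pow]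
  rw [mul_inv_rev, mul_inv_cancel_left, inv_mul_cancel]

/-- powers with exponents in `ZMod p` -/
def pw {p : ℕ} (b : G) (k : ZMod p) : G := b ^ k.val

theorem pw_natCast {p : ℕ} {b : G} (hb : b ^ p = 1) (n : ℕ) : pw b (n : ZMod p) = b ^ n := by
  unfold pw
  rw [ZMod.val_natCast, ← pow_mod_orderOf, Nat.mod_mod_of_dvd _ (orderOf_dvd_of_pow_eq_one hb),
    pow_mod_orderOf]

theorem pw_add {p : ℕ} [NeZero p] {b : G} (hb : b ^ p = 1) (k l : ZMod p) :
    pw b (k + l) = pw b k * pw b l := by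
  have : k + l = ((k.val + l.val : ℕ) : ZMod p) := by simp
  rw [this, pw_natCast hb, pow_add]; rfl

theorem pw_mul {p : ℕ} [NeZero p] {b : G} (hb : b ^ p = 1) (k l : ZMod p) :
    pw b (k * l) = pw (pw b k) l := by
  have : k * l = ((k.val * l.val : ℕ) : ZMod p) := by simp
  rw [this, pw_natCast hb, pow_mul]; rfl

theorem pw_zero {p : ℕ} (b : G) : pw b (0 : ZMod p) = 1 := by simp [pw]

theorem pw_one {p : ℕ} {b : G} (hb : b ^ p = 1) : pw b (1 : ZMod p) = b := by
  have := pw_natCast hb 1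
  simpa using this

theorem pw_pow_p {p : ℕ} {b : G} (hb : b ^ p = 1) (k : ZMod p) : pw b k ^ p = 1 := by
  unfold pw; rw [← pow_mul, mul_comm, pow_mul, hb, one_pow]

theorem pw_neg {p : ℕ} [NeZero p] {b : G} (hb : b ^ p = 1) (k : ZMod p) :
    pw b (-k) = (pw b k)⁻¹ := by
  rw [eq_inv_iff_mul_eq_one, ← pw_add hb]; simp [pw_zero]

theorem pw_mem {p : ℕ} {A : Subgroup G} {b : G} (hb : b ∈ A) (k : ZMod p) : pw b k ∈ A :=
  A.pow_mem hb _

variable {p : ℕ} [hp : Fact p.Prime] {A : Subgroup G}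
  (hA : ∀ a ∈ A, a ^ p = 1) (hAc : ∀ a ∈ A, ∀ b ∈ A, a * b = b * a)

include hA hAc

omit hp hA in
theorem conj_indep {a b : G} (ha : a ∈ A) (hb : b ∈ A) (y : G) :
    (a * y)⁻¹ * b * (a * y) = y⁻¹ * b * y := by
  rw [mul_inv_rev]
  have := hAc b hb a ha
  calc y⁻¹ * a⁻¹ * b * (a * y) = y⁻¹ * a⁻¹ * (b * a) * y := by simp only [mul_assoc]
    _ = _ := by rw [this]; simp only [mul_assoc, inv_mul_cancel_left]

theorem full_line {y d c : G} (hd : d ∈ A) (hc : c ∈ A) {k j : ZMod p} (hj : j ≠ 0)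
    (h0 : (d * pw c k * y) ^ 3 = 1) (h1 : (d * pw c (k + j) * y) ^ 3 = 1)
    (h2 : (d * pw c (k - j) * y) ^ 3 = 1) (l : ZMod p) : (d * pw c l * y) ^ 3 = 1 := by
  set x := d * pw c k * y with hx
  set e := pw c j with he
  have hcp := hA c hc
  have hem : e ∈ A := pw_mem hc j
  have g1 : d * pw c (k + j) * y = e * x := by
    rw [pw_add hcp, hx, ← he]
    have : d * (pw c k * e) = e * (d * pw c k) := by
      rw [← mul_assoc, hAc _ (A.mul_mem hd (pw_mem hc k)) _ hem]
    rw [this]; simp only [mul_assoc]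
  have g2 : d * pw c (k - j) * y = e⁻¹ * x := by
    rw [sub_eq_add_neg, pw_add hcp, hx, pw_neg hcp, ← he]
    have : d * (pw c k * e⁻¹) = e⁻¹ * (d * pw c k) := by
      rw [← mul_assoc, hAc _ (A.mul_mem hd (pw_mem hc k)) _ (A.inv_mem hem)]
    rw [this]; simp only [mul_assoc]
  rw [g1] at h1
  rw [g2] at h2
  obtain ⟨q1, q2⟩ := good_of_cubes h0 h1 h2
  have := cube_of_good h0 q1 q2 ((l - k) * j⁻¹).val
  have e1 : e ^ ((l - k) * j⁻¹).val = pw c (l - k) := by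
    change pw e ((l - k) * j⁻¹) = _
    rw [he, ← pw_mul hcp]
    congr 1
    field_simp
  rw [e1] at this
  convert this using 2
  have e2 : pw c l = pw c (l - k) * pw c k := by rw [← pw_add hcp]; simp
  rw [e2, hx, ← mul_assoc d, hAc d hd _ (pw_mem hc _)]
  simp only [mul_assoc]

theorem line_dichotomy (h5 : 5 ≤ p) {y d c : G} (hd : d ∈ A) (hc : c ∈ A)
    [DecidablePred fun k : ZMod p => (d * pw c k * y) ^ 3 = 1] :
    (∀ k : ZMod p, (d * pw c k * y) ^ 3 = 1) ∨
    (Finset.univ.filter fun k : ZMod p => (d * pw c k * y) ^ 3 = 1).card ≤ rr p := by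
  by_cases h : APFree (Finset.univ.filter fun k : ZMod p => (d * pw c k * y) ^ 3 = 1)
  · exact Or.inr (apfree_rr h5 _ h)
  · left
    simp only [APFree, Finset.mem_filter, Finset.mem_univ, true_and] at h
    push Not at h
    obtain ⟨k, j, hj, a1, a2, a3, _⟩ := h
    exact full_line hA hAc hd hc hj a2 a3 a1

theorem full_two {y d d' c : G} (hd : d ∈ A) (hd' : d' ∈ A) (hc : c ∈ A)
    (h : ∀ k : ZMod p, (d * pw c k * y) ^ 3 = 1) (h' : ∀ k : ZMod p, (d' * pw c k * y) ^ 3 = 1) :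
    Commute (d' * d⁻¹) (y⁻¹ * c * y) := by
  have hcp := hA c hc
  have key : ∀ d ∈ A, (∀ k : ZMod p, (d * pw c k * y) ^ 3 = 1) →
      y⁻¹ * (d⁻¹ * (y⁻¹ * c * y) * d) * y = (y⁻¹ * c * y * c)⁻¹ := by
    intro d hd h
    have h0 := h 0
    have h1 := h 1
    have h2 := h (-1)
    rw [pw_zero, mul_one] at h0
    rw [pw_one hcp, hAc d hd c hc, mul_assoc] at h1
    rw [pw_neg hcp, pw_one hcp, hAc d hd _ (A.inv_mem hc), mul_assoc] at h2
    obtain ⟨_, q2⟩ := good_of_cubes h0 h1 h2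
    rw [conj_indep hAc hd hc] at q2
    rw [← q2]
    simp only [mul_inv_rev, mul_assoc]
  have e := (key d hd h).trans (key d' hd' h').symm
  have e' : d⁻¹ * (y⁻¹ * c * y) * d = d'⁻¹ * (y⁻¹ * c * y) * d' := by
    exact mul_left_cancel (mul_right_cancel e)
  generalize y⁻¹ * c * y = w at *
  unfold Commute SemiconjBy
  have : d' * (d⁻¹ * w * d) * d⁻¹ = d' * (d'⁻¹ * w * d') * d⁻¹ := by rw [e']
  simpa [mul_assoc] using this

theorem cube_count [Fintype A] (h5 : 5 ≤ p) {y b c : G} (hb : b ∈ A) (hc : c ∈ A)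
    (hne : ¬ Commute b (y⁻¹ * c * y)) [DecidablePred fun a : A => ((a : G) * y) ^ 3 = 1] :
    p * (Finset.univ.filter fun a : A => ((a : G) * y) ^ 3 = 1).card ≤ rr p * Fintype.card A := by
  classical
  have hbp := hA b hb
  have hcp := hA c hc
  let Z : A → Finset (ZMod p × ZMod p) := fun a =>
    Finset.univ.filter fun z => ((a : G) * pw b z.1 * pw c z.2 * y) ^ 3 = 1
  have hZ : ∀ a, (Z a).card ≤ rr p * p := by
    intro a
    apply plane_lemma (two_rr_lt h5)
    · intro m β
      have e : ∀ s, (a : G) * pw b s * pw c (m * s + β) = (a * pw c β) * pw (b * pw c m) s := by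
        intro s
        have : pw (b * pw c m) s = pw b s * pw c (m * s) := by
          rw [pw_mul hcp]
          have hcm : Commute b (pw c m) := hAc b hb _ (pw_mem hc m)
          unfold pw at hcm ⊢
          exact hcm.mul_pow _
        rw [this, pw_add hcp, mul_assoc (a : G) (pw c β),
          hAc (pw c β) (pw_mem hc _) _ (A.mul_mem (pw_mem hb _) (pw_mem hc _))]
        simp only [mul_assoc]
      simp only [Z, Finset.mem_filter, Finset.mem_univ, true_and, e]
      exact line_dichotomy hA hAc h5 (A.mul_mem a.2 (pw_mem hc _)) (A.mul_mem hb (pw_mem hc _))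
    · intro s
      simp only [Z, Finset.mem_filter, Finset.mem_univ, true_and]
      exact line_dichotomy hA hAc h5 (A.mul_mem a.2 (pw_mem hb _)) hc
    · intro s s' hs hs'
      simp only [Z, Finset.mem_filter, Finset.mem_univ, true_and] at hs hs'
      by_contra hss
      have := full_two hA hAc (A.mul_mem a.2 (pw_mem hb _)) (A.mul_mem a.2 (pw_mem hb _)) hc hs hs'
      have e : (a : G) * pw b s' * (a * pw b s)⁻¹ = pw b (s' - s) := by
        rw [hAc a a.2 _ (pw_mem hb _), hAc a a.2 _ (pw_mem hb _), sub_eq_add_neg, pw_add hbp,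
          pw_neg hbp]
        simp [mul_assoc]
      rw [e] at this
      apply hne
      have h2 := this.pow_left ((s' - s)⁻¹).val
      have h3 : pw b (s' - s) ^ ((s' - s)⁻¹).val = b := by
        change pw (pw b (s' - s)) ((s' - s)⁻¹) = b
        rw [← pw_mul hbp, mul_inv_cancel₀ (sub_ne_zero.mpr (Ne.symm hss)), pw_one hbp]
      rwa [h3] at h2
  have hsum : ∑ a, (Z a).card =
      p ^ 2 * (Finset.univ.filter fun a : A => ((a : G) * y) ^ 3 = 1).card := by
    simp only [Z, Finset.card_filter]
    rw [Finset.sum_comm]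
    have : ∀ z : ZMod p × ZMod p,
        (∑ a : A, if ((a : G) * pw b z.1 * pw c z.2 * y) ^ 3 = 1 then 1 else 0)
        = ∑ a : A, if ((a : G) * y) ^ 3 = 1 then 1 else 0 := by
      intro z
      refine Fintype.sum_equiv (Equiv.mulRight (⟨pw b z.1 * pw c z.2,
        A.mul_mem (pw_mem hb _) (pw_mem hc _)⟩ : A)) _ _ ?_
      intro a
      simp [mul_assoc]
    rw [Finset.sum_congr rfl fun z _ => this z, Finset.sum_const, Finset.card_univ,
      Fintype.card_prod, ZMod.card, smul_eq_mul, sq]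
  have hle : ∑ a, (Z a).card ≤ Fintype.card A * (rr p * p) := by
    refine (Finset.sum_le_sum fun a _ => hZ a).trans ?_
    rw [Finset.sum_const, Finset.card_univ, smul_eq_mul]
  rw [hsum] at hle
  have hp0 : 0 < p := hp.out.pos
  apply Nat.le_of_mul_le_mul_left _ hp0
  calc _ = p ^ 2 * (Finset.univ.filter fun a : A => ((a : G) * y) ^ 3 = 1).card := by ring
    _ ≤ _ := hle
    _ = _ := by ring

end grp
end AvgOrd

namespace AvgOrd

open Classical in
/-- Sum of `5 - orderOf` over the coset `A y`. -/
noncomputable def SS {G : Type*} [Group G] [Fintype G] (A : Subgroup G) (y : G) : ℤ :=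
  ∑ a : A, (5 - (orderOf ((a : G) * y) : ℤ))

section coset
variable {G : Type*} [Group G] [Fintype G]

theorem SS_mul_left (A : Subgroup G) (y : G) (b : G) (hb : b ∈ A) : SS A (b * y) = SS A y := by
  classical
  unfold SS
  refine Fintype.sum_equiv (Equiv.mulRight (⟨b, hb⟩ : A)) _ _ ?_
  intro a; simp [mul_assoc]

/-- Averaging over cosets, for a subset stable under left multiplication by `A`. -/
theorem sum_SS (A : Subgroup G) (P : G → Prop) [DecidablePred P] (hP : ∀ a ∈ A, ∀ y, P (a * y) ↔ P y) :
    ∑ y ∈ Finset.univ.filter P, SS A y =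
      (Nat.card A : ℤ) * ∑ y ∈ Finset.univ.filter P, (5 - (orderOf y : ℤ)) := by
  classical
  unfold SS
  rw [Finset.sum_comm]
  have : ∀ a : A, ∑ y ∈ Finset.univ.filter P, (5 - (orderOf ((a : G) * y) : ℤ)) =
      ∑ y ∈ Finset.univ.filter P, (5 - (orderOf y : ℤ)) := by
    intro a
    refine Finset.sum_equiv (Equiv.mulLeft (a : G)) ?_ ?_
    · intro y; simp [hP a a.2]
    · intro y _; simp
  rw [Finset.sum_congr rfl fun a _ => this a, Finset.sum_const, Finset.card_univ, nsmul_eq_mul,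
    Nat.card_eq_fintype_card]

variable {p : ℕ} [hp : Fact p.Prime] {A : Subgroup G}
  (hA : ∀ a ∈ A, a ^ p = 1) (hAc : ∀ a ∈ A, ∀ b ∈ A, a * b = b * a)
  (hmax : ∀ g : G, g ^ p = 1 → (∀ a ∈ A, a * g = g * a) → g ∈ A)

include hA

omit [Fintype G] in
theorem order_eq_p {a : G} (ha : a ∈ A) (h1 : a ≠ 1) : orderOf a = p := by
  rcases (Nat.dvd_prime hp.out).mp (orderOf_dvd_of_pow_eq_one (hA a ha)) with h | h
  · exact absurd (orderOf_eq_one_iff.mp h) h1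
  · exact h

omit [Fintype G] in
theorem not_two (h5 : 5 ≤ p) {z : G} (hz : z ^ 2 = 1) (hzA : z ∈ A) : z = 1 := by
  by_contra h
  have h1 := order_eq_p hA hzA h
  have h2 := orderOf_dvd_of_pow_eq_one hz
  rw [h1] at h2
  have := Nat.le_of_dvd (by norm_num) h2
  omega

include hAc

omit hp hAc in
include hmax in
theorem exists_not_commute {y : G} (hy : y ∉ Subgroup.normalizer (A : Set G)) :
    ∃ b ∈ A, ∃ c ∈ A, ¬ Commute b (y⁻¹ * c * y) := by
  by_contra hno
  push Not at hno
  apply hy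
  have h1 : ∀ c ∈ A, y⁻¹ * c * y ∈ A := by
    intro c hc
    apply hmax
    · have h := conj_pow (i := p) (a := y⁻¹) (b := c)
      rw [inv_inv] at h
      rw [h, hA c hc]; simp
    · intro a ha
      exact hno a ha c hc
  have h2 : y⁻¹ ∈ Subgroup.normalizer (A : Set G) := by
    refine Subgroup.mem_normalizer_fintype ?_
    intro c hc
    simpa using h1 c hc
  simpa using Subgroup.inv_mem _ h2

theorem bound_no_inv (h5 : 5 ≤ p) {y b c : G} (hb : b ∈ A) (hc : c ∈ A)
    (hne : ¬ Commute b (y⁻¹ * c * y)) (h2 : ∀ a ∈ A, orderOf (a * y) ≠ 2) :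
    (p : ℤ) * SS A y ≤ (p + rr p) * Nat.card A := by
  classical
  have hcount := cube_count hA hAc h5 hb hc hne
  have hyA : y ∉ A := by
    intro hy
    apply hne
    exact hAc _ hb _ (A.mul_mem (A.mul_mem (A.inv_mem hy) hc) hy)
  have hS : SS A y ≤ Fintype.card A +
      (Finset.univ.filter fun a : A => ((a : G) * y) ^ 3 = 1).card := by
    unfold SS
    rw [Finset.card_filter, ← Finset.card_univ, Finset.card_eq_sum_ones]
    push_cast
    rw [← Finset.sum_add_distrib]
    refine Finset.sum_le_sum fun a _ => ?_
    have h0 : 0 < orderOf ((a : G) * y) := orderOf_pos _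
    have h1 : orderOf ((a : G) * y) ≠ 1 := by
      intro h
      rw [orderOf_eq_one_iff] at h
      apply hyA
      have : y = (a : G)⁻¹ := by exact (inv_eq_of_mul_eq_one_right h).symm
      rw [this]; exact A.inv_mem a.2
    have h2' := h2 a a.2
    split_ifs with h
    · omega
    · have h3 : orderOf ((a : G) * y) ≠ 3 := by
        intro h'
        exact h (h' ▸ pow_orderOf_eq_one _)
      omega
  have hp0 : (0 : ℤ) ≤ p := by positivity
  calc (p : ℤ) * SS A y ≤ p * (Fintype.card A +
      (Finset.univ.filter fun a : A => ((a : G) * y) ^ 3 = 1).card) := by gcongr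
    _ = p * Fintype.card A + ((p * (Finset.univ.filter fun a : A => ((a : G) * y) ^ 3 = 1).card : ℕ) : ℤ) := by
      push_cast; ring
    _ ≤ p * Fintype.card A + ((rr p * Fintype.card A : ℕ) : ℤ) := by gcongr
    _ = _ := by rw [Nat.card_eq_fintype_card]; push_cast; ring


omit hA hAc hp [Fintype G] in
theorem order_three_aux {a z : G} (hz : z ^ 2 = 1) (h3 : (a * z) ^ 3 = 1) :
    orderOf (a ^ 2 * z) = orderOf a := by
  have hzi : z⁻¹ = z := by rw [inv_eq_iff_mul_eq_one, ← pow_two, hz]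
  have e1 : a * z * (a * z) = (a * z)⁻¹ := by
    rw [eq_inv_iff_mul_eq_one, ← h3, pow_succ, pow_two]
  have e2 : a ^ 2 * z = (a * z) * a⁻¹ * (a * z)⁻¹ := by
    rw [mul_inv_rev, hzi]
    have e3 : z * a * z = a⁻¹ * z * a⁻¹ := by
      rw [mul_inv_rev, hzi] at e1
      have : a⁻¹ * (a * z * (a * z)) = a⁻¹ * (z * a⁻¹) := by rw [e1]
      simpa [mul_assoc] using this
    have e4 : z * a⁻¹ * z = a * z * a := by
      have := congrArg (·⁻¹) e3
      simpa [mul_assoc, hzi] using this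
    calc a ^ 2 * z = a * (a * z * a) * a⁻¹ := by simp [pow_two, mul_assoc]
      _ = _ := by rw [← e4]; simp only [mul_assoc]
  have := MulEquiv.orderOf_eq (MulAut.conj (a * z)) a⁻¹
  rw [MulAut.conj_apply] at this
  rw [e2, this, orderOf_inv]

theorem bound_inv (h5 : 5 ≤ p) {z : G} (hz : orderOf z = 2) :
    (∀ a ∈ A, z * a * z⁻¹ = a⁻¹) ∨ (p : ℤ) * SS A z ≤ (p + 2) * Nat.card A := by
  classical
  by_cases hall : ∀ a ∈ A, z * a * z⁻¹ = a⁻¹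
  · exact Or.inl hall
  right
  have hz2 : z ^ 2 = 1 := hz ▸ pow_orderOf_eq_one z
  have hzi : z⁻¹ = z := by rw [inv_eq_iff_mul_eq_one, ← pow_two, hz2]
  have hz1 : z ≠ 1 := by rintro rfl; simp at hz
  have hzA : z ∉ A := fun h => hz1 (not_two hA h5 hz2 h)
  let I : Subgroup A :=
    { carrier := {a | z * (a : G) * z⁻¹ = (a : G)⁻¹}
      mul_mem' := by
        intro a b ha hb
        simp only [Set.mem_ofPred_eq, Subgroup.coe_mul] at *
        calc z * ((a : G) * b) * z⁻¹ = (z * a * z⁻¹) * (z * b * z⁻¹) := by simp [mul_assoc]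
          _ = (b * a : G)⁻¹ := by rw [ha, hb, mul_inv_rev]
          _ = _ := by rw [hAc a a.2 b b.2]
      one_mem' := by simp
      inv_mem' := by
        intro a ha
        simp only [Set.mem_ofPred_eq, Subgroup.coe_inv] at *
        rw [← ha]; simp [mul_assoc, ← ha] }
  have hpA : IsPGroup p A := by
    intro a
    exact ⟨1, Subtype.ext (by simpa using hA a a.2)⟩
  have hIcard : p * Nat.card I ≤ Nat.card A := by
    have hne : I.index ≠ 1 := by
      rw [Ne, Subgroup.index_eq_one]
      intro h
      apply hall
      intro a ha
      have : (⟨a, ha⟩ : A) ∈ I := by rw [h]; trivial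
      exact this
    obtain ⟨n, hn⟩ := hpA.index I
    have hdvd : p ∣ I.index := by
      rw [hn]
      apply dvd_pow_self
      rintro rfl
      exact hne (by simpa using hn)
    rw [← I.card_mul_index, mul_comm]
    exact Nat.mul_le_mul_left _ (Nat.le_of_dvd (Nat.pos_of_ne_zero Subgroup.index_ne_zero_of_finite) hdvd)
  let Y : Finset A := Finset.univ.filter fun a => orderOf ((a : G) * z) = 3
  have hYinj : (Y.image fun a => a ^ 2).card = Y.card := by
    apply Finset.card_image_of_injective
    intro a b hab
    simp only at hab
    have : (a * b⁻¹) ^ 2 = 1 := by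
      have hc : Commute a b⁻¹ := Commute.inv_right (Subtype.ext (hAc a a.2 b b.2))
      rw [hc.mul_pow, inv_pow, hab, mul_inv_cancel]
    have h2 : ((a * b⁻¹ : A) : G) = 1 := by
      apply not_two hA h5 _ (a * b⁻¹).2
      exact_mod_cast congrArg Subtype.val this
    have h3 : a * b⁻¹ = 1 := Subtype.ext h2
    exact mul_inv_eq_one.mp h3
  have hY2 : ∀ a : A, a ∈ Y.image (fun a => a ^ 2) → orderOf ((a : G) * z) = p := by
    intro a ha
    rw [Finset.mem_image] at ha
    obtain ⟨b, hb, rfl⟩ := ha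
    have hb3 : orderOf ((b : G) * z) = 3 := by simpa [Y] using hb
    have := order_three_aux (a := (b : G)) hz2 (hb3 ▸ pow_orderOf_eq_one _)
    rw [Subgroup.coe_pow, this]
    apply order_eq_p hA b.2
    intro h
    rw [h, one_mul, hz] at hb3
    omega
  have hS : SS A z ≤ Nat.card A + 2 * Nat.card I := by
    have hIc : (Nat.card I : ℤ) = ∑ a : A, if a ∈ I then 1 else 0 := by
      rw [Nat.card_eq_fintype_card, Fintype.card_subtype, Finset.card_filter]
      push_cast; rfl
    have hYc : (∑ a : A, if a ∈ Y then (1 : ℤ) else 0) -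
        (∑ a : A, if a ∈ Y.image (fun a => a ^ 2) then (1 : ℤ) else 0) = 0 := by
      rw [← Finset.sum_filter, ← Finset.sum_filter]
      simp only [Finset.filter_mem_eq_inter, Finset.univ_inter, Finset.sum_const, nsmul_eq_mul, mul_one]
      rw [hYinj]; simp
    have hAcard : (Nat.card A : ℤ) = ∑ a : A, 1 := by
      rw [Nat.card_eq_fintype_card]; simp
    have hR : (Nat.card A : ℤ) + 2 * Nat.card I = ∑ a : A, (1 + 2 * (if a ∈ I then 1 else 0) +
        ((if a ∈ Y then (1 : ℤ) else 0) -
          (if a ∈ Y.image (fun a => a ^ 2) then (1 : ℤ) else 0))) := by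
      rw [Finset.sum_add_distrib, Finset.sum_sub_distrib, hYc, Finset.sum_add_distrib,
        ← Finset.mul_sum, hIc, hAcard, add_zero]
    rw [hR]
    unfold SS
    refine Finset.sum_le_sum fun a _ => ?_
    have h0 : 0 < orderOf ((a : G) * z) := orderOf_pos _
    have h1 : orderOf ((a : G) * z) ≠ 1 := by
      intro h
      rw [orderOf_eq_one_iff] at h
      apply hzA
      have : z = (a : G)⁻¹ := (inv_eq_of_mul_eq_one_right h).symm
      rw [this]; exact A.inv_mem a.2
    have hYm : a ∈ Y ↔ orderOf ((a : G) * z) = 3 := by simp [Y]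
    have hIm : orderOf ((a : G) * z) = 2 → a ∈ I := by
      intro h
      have hh : ((a : G) * z) ^ 2 = 1 := h ▸ pow_orderOf_eq_one _
      change z * (a : G) * z⁻¹ = (a : G)⁻¹
      rw [hzi, eq_inv_iff_mul_eq_one]
      have : (a : G) * (z * a * z) = 1 := by rw [← hh, pow_two]; simp only [mul_assoc]
      exact mul_eq_one_comm.mp this
    have hY2a := hY2 a
    by_cases c1 : a ∈ Y.image (fun a => a ^ 2)
    · have := hY2a c1
      split_ifs <;> omega
    · rw [if_neg c1]
      rcases eq_or_ne (orderOf ((a : G) * z)) 2 with c2 | c2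
      · rw [if_pos (hIm c2)]
        split_ifs <;> omega
      · rcases eq_or_ne (orderOf ((a : G) * z)) 3 with c3 | c3
        · rw [if_pos (hYm.mpr c3)]
          split_ifs <;> omega
        · split_ifs <;> omega
  have hIc' : (p : ℤ) * Nat.card I ≤ Nat.card A := by exact_mod_cast hIcard
  have hp0 : (0 : ℤ) ≤ p := by positivity
  have := mul_le_mul_of_nonneg_left hS hp0
  linarith

end coset
end AvgOrd

namespace AvgOrd

section coset
variable {G : Type*} [Group G] [Fintype G]
variable {p : ℕ} [hp : Fact p.Prime] {A : Subgroup G}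
  (hA : ∀ a ∈ A, a ^ p = 1) (hAc : ∀ a ∈ A, ∀ b ∈ A, a * b = b * a)
  (hmax : ∀ g : G, g ^ p = 1 → (∀ a ∈ A, a * g = g * a) → g ∈ A)

omit [Fintype G] in
theorem card_as_sum (A : Subgroup G) [Fintype A] : (Nat.card A : ℤ) = ∑ _a : A, 1 := by
  rw [Nat.card_eq_fintype_card]; simp

omit [Fintype G] in
theorem not_mem_order_ne_one {y : G} (hy : y ∉ A) {a : G} (ha : a ∈ A) : orderOf (a * y) ≠ 1 := by
  intro h
  rw [orderOf_eq_one_iff] at h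
  apply hy
  have : y = a⁻¹ := (inv_eq_of_mul_eq_one_right h).symm
  rw [this]; exact A.inv_mem ha

omit [Fintype G] in
include hAc in
theorem inv_of_mul_inv {a y : G} (ha : a ∈ A)
    (h : ∀ b ∈ A, (a * y) * b * (a * y)⁻¹ = b⁻¹) : ∀ b ∈ A, y * b * y⁻¹ = b⁻¹ := by
  intro b hb
  have h1 := h b hb
  have h2 : y * b * y⁻¹ = a⁻¹ * b⁻¹ * a := by
    rw [← h1]; simp [mul_assoc]
  rw [h2, mul_assoc, hAc b⁻¹ (A.inv_mem hb) a ha, inv_mul_cancel_left]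

include hA hAc hmax in
theorem bound_out (h5 : 5 ≤ p) {y : G} (hy : y ∉ Subgroup.normalizer (A : Set G)) :
    (p : ℤ) * SS A y ≤ (p + rr p) * Nat.card A := by
  obtain ⟨b, hb, c, hc, hne⟩ := exists_not_commute hA hmax hy
  by_cases h2 : ∃ a ∈ A, orderOf (a * y) = 2
  · obtain ⟨a, ha, h2⟩ := h2
    rcases bound_inv hA hAc h5 h2 with h | h
    · exfalso
      apply hy
      refine Subgroup.mem_normalizer_fintype ?_
      intro c hc
      rw [inv_of_mul_inv hAc ha h c hc]
      exact A.inv_mem hc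
    · rw [SS_mul_left A y a ha] at h
      refine h.trans ?_
      have := two_le_rr h5
      gcongr
      exact_mod_cast this
  · push Not at h2
    exact bound_no_inv hA hAc h5 hb hc hne h2

include hA hAc in
theorem bound_rest (h5 : 5 ≤ p) {y : G} (h1 : ¬ ∀ a ∈ A, a * y = y * a)
    (h2 : ¬ ∀ a ∈ A, y * a * y⁻¹ = a⁻¹) : SS A y ≤ 2 * Nat.card A := by
  classical
  by_cases h : ∃ a ∈ A, orderOf (a * y) = 2
  · obtain ⟨a, ha, h⟩ := h
    rcases bound_inv hA hAc h5 h with h' | h'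
    · exact absurd (inv_of_mul_inv hAc ha h') h2
    · rw [SS_mul_left A y a ha] at h'
      have hq : (0 : ℤ) ≤ Nat.card A := by positivity
      have hp5 : (5 : ℤ) ≤ p := by exact_mod_cast h5
      have : (p : ℤ) * SS A y ≤ p * (2 * Nat.card A) := by nlinarith
      exact le_of_mul_le_mul_left this (by omega)
  · push Not at h
    have hyA : y ∉ A := fun hy => h1 fun a ha => hAc a ha y hy
    rw [card_as_sum, Finset.mul_sum]
    refine Finset.sum_le_sum fun a _ => ?_
    have h0 : 0 < orderOf ((a : G) * y) := orderOf_pos _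
    have := h a a.2
    have := not_mem_order_ne_one hyA a.2
    omega

include hA hAc in
theorem bound_invert (h5 : 5 ≤ p) (hne : A ≠ ⊥) {y : G} (h2 : ∀ a ∈ A, y * a * y⁻¹ = a⁻¹) :
    SS A y ≤ 3 * Nat.card A := by
  classical
  have hyA : y ∉ A := by
    intro hy
    apply hne
    rw [Subgroup.eq_bot_iff_forall]
    intro a ha
    apply not_two hA h5 _ ha
    have := h2 a ha
    rw [hAc y hy a ha, mul_inv_cancel_right] at this
    rw [pow_two]
    nth_rw 1 [this]
    simp
  rw [card_as_sum, Finset.mul_sum]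
  refine Finset.sum_le_sum fun a _ => ?_
  have h0 : 0 < orderOf ((a : G) * y) := orderOf_pos _
  have := not_mem_order_ne_one hyA a.2
  omega

include hA hAc in
theorem bound_cent (h5 : 5 ≤ p) {y : G} (h1 : ∀ a ∈ A, a * y = y * a) :
    SS A y ≤ 4 + (Nat.card A - 1) * (5 - p) := by
  classical
  have huniq : ∀ a b : A, ¬ p ∣ orderOf ((a : G) * y) → ¬ p ∣ orderOf ((b : G) * y) → a = b := by
    intro a b ha hb
    have hcomm : Commute ((a : G) * y) ((b : G) * y)⁻¹ := by
      apply Commute.inv_right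
      have e1 : Commute (a : G) b := hAc a a.2 b b.2
      have e2 : Commute (a : G) y := h1 a a.2
      have e3 : Commute y (b : G) := (h1 b b.2).symm
      exact (e1.mul_right e2).mul_left (e3.mul_right (Commute.refl y))
    have hd : ((a : G) * y) * ((b : G) * y)⁻¹ = a * (b : G)⁻¹ := by simp [mul_assoc]
    have hdvd := hcomm.orderOf_mul_dvd_mul_orderOf
    rw [hd, orderOf_inv] at hdvd
    by_contra hab
    have hne : (a : G) * (b : G)⁻¹ ≠ 1 := by
      intro h
      exact hab (Subtype.ext (mul_inv_eq_one.mp h))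
    rw [order_eq_p hA (A.mul_mem a.2 (A.inv_mem b.2)) hne] at hdvd
    rcases hp.out.dvd_mul.mp hdvd with h | h
    · exact ha h
    · exact hb h
  have hf : ∀ a : A, p ∣ orderOf ((a : G) * y) → (5 - (orderOf ((a : G) * y) : ℤ)) ≤ 5 - p := by
    intro a ha
    have := Nat.le_of_dvd (orderOf_pos _) ha
    omega
  have hcard : (Nat.card A : ℤ) = ∑ a : A, 1 := card_as_sum A
  by_cases hex : ∃ a : A, ¬ p ∣ orderOf ((a : G) * y)
  · obtain ⟨a, ha⟩ := hex
    unfold SS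
    rw [← Finset.add_sum_erase _ _ (Finset.mem_univ a)]
    have hca : (Nat.card A : ℤ) - 1 = ((Finset.univ.erase a).card : ℤ) := by
      rw [Finset.card_erase_of_mem (Finset.mem_univ _), Finset.card_univ, Nat.card_eq_fintype_card]
      have : 0 < Fintype.card A := Fintype.card_pos
      omega
    rw [hca, ← nsmul_eq_mul, ← Finset.sum_const]
    have h0 : 0 < orderOf ((a : G) * y) := orderOf_pos _
    refine add_le_add (by omega) (Finset.sum_le_sum fun b hb => hf b ?_)
    by_contra hb'
    exact (Finset.mem_erase.mp hb).1 (huniq b a hb' ha)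
  · push Not at hex
    have : SS A y ≤ ∑ a : A, (5 - (p : ℤ)) := Finset.sum_le_sum fun a _ => hf a (hex a)
    rw [Finset.sum_const, Finset.card_univ, nsmul_eq_mul, ← Nat.card_eq_fintype_card] at this
    have hp0 : (0 : ℤ) ≤ p := by positivity
    linarith

/-- elements centralizing -/
def CC (A : Subgroup G) (y : G) : Prop := ∀ a ∈ A, a * y = y * a
/-- elements inverting -/
def VV (A : Subgroup G) (y : G) : Prop := ∀ a ∈ A, y * a * y⁻¹ = a⁻¹

open Classical in
theorem VV_le_CC (A : Subgroup G) : (Finset.univ.filter (VV A)).card ≤ (Finset.univ.filter (CC A)).card := by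
  by_cases h : ∃ y0, VV A y0
  · obtain ⟨y0, h0⟩ := h
    refine Finset.card_le_card_of_injOn (fun y => y0⁻¹ * y) ?_ ?_
    · intro y hy
      simp only [Finset.coe_filter, Finset.mem_univ, true_and, Set.mem_ofPred_eq] at hy ⊢
      intro a ha
      have h1 := hy a ha
      have h2 := h0 a ha
      have h3 : y * a * y⁻¹ = y0 * a * y0⁻¹ := h1.trans h2.symm
      have : y0⁻¹ * (y * a * y⁻¹) * y = y0⁻¹ * (y0 * a * y0⁻¹) * y := by rw [h3]
      simpa [mul_assoc] using this.symm
    · intro a _ b _ h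
      exact mul_left_cancel h
  · push Not at h
    rw [Finset.filter_eq_empty_iff.mpr (fun x _ => h x)]
    simp

omit [Fintype G] in
include hA in
theorem CC_not_VV (h5 : 5 ≤ p) (hne : A ≠ ⊥) {y : G} (h : CC A y) : ¬ VV A y := by
  intro h'
  apply hne
  rw [Subgroup.eq_bot_iff_forall]
  intro a ha
  apply not_two hA h5 _ ha
  have := h' a ha
  rw [← h a ha, mul_inv_cancel_right] at this
  rw [pow_two]
  nth_rw 1 [this]
  simp

open Classical in
include hA hAc in
theorem sum_K (h5 : 5 ≤ p) (hne : A ≠ ⊥) (α β : ℤ) (hα : ∀ y, CC A y → SS A y ≤ α)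
    (hβ : ∀ y ∈ Subgroup.normalizer (A : Set G), ¬ CC A y → ¬ VV A y → SS A y ≤ β) :
    ∃ c v : ℤ, c = (Finset.univ.filter (CC A)).card ∧ 0 ≤ v ∧ v ≤ c ∧
      c + v ≤ Nat.card (Subgroup.normalizer (A : Set G)) ∧
      (Nat.card A : ℤ) * ∑ y ∈ Finset.univ.filter (· ∈ Subgroup.normalizer (A : Set G)),
        (5 - (orderOf y : ℤ)) ≤
      c * α + 3 * Nat.card A * v + β * (Nat.card (Subgroup.normalizer (A : Set G)) - c - v) := by
  set K := Subgroup.normalizer (A : Set G) with hK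
  have hCK : ∀ y, CC A y → y ∈ K := by
    intro y hy
    refine Subgroup.mem_normalizer_fintype ?_
    intro a ha
    rw [← hy a ha]; simpa using ha
  have hVK : ∀ y, VV A y → y ∈ K := by
    intro y hy
    refine Subgroup.mem_normalizer_fintype ?_
    intro a ha
    rw [hy a ha]; exact A.inv_mem ha
  have hcK : ((Nat.card K : ℕ) : ℤ) = ∑ y ∈ Finset.univ.filter (· ∈ K), (1 : ℤ) := by
    rw [Nat.card_eq_fintype_card, Fintype.card_subtype]; simp
  have hc : ((Finset.univ.filter (CC A)).card : ℤ) =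
      ∑ y ∈ Finset.univ.filter (· ∈ K), if CC A y then (1 : ℤ) else 0 := by
    rw [← Finset.sum_filter, Finset.filter_filter, Finset.sum_const, nsmul_eq_mul, mul_one]
    congr 3
    ext y
    exact ⟨fun h => ⟨hCK y h, h⟩, fun h => h.2⟩
  have hv : ((Finset.univ.filter (VV A)).card : ℤ) =
      ∑ y ∈ Finset.univ.filter (· ∈ K), if VV A y then (1 : ℤ) else 0 := by
    rw [← Finset.sum_filter, Finset.filter_filter, Finset.sum_const, nsmul_eq_mul, mul_one]
    congr 3
    ext y
    exact ⟨fun h => ⟨hVK y h, h⟩, fun h => h.2⟩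
  refine ⟨(Finset.univ.filter (CC A)).card, (Finset.univ.filter (VV A)).card, rfl,
    by positivity, by exact_mod_cast VV_le_CC A, ?_, ?_⟩
  · rw [hc, hv, hcK, ← Finset.sum_add_distrib]
    refine Finset.sum_le_sum fun y _ => ?_
    have := CC_not_VV hA h5 hne (y := y)
    split_ifs <;> simp_all
  · have hPK : ∀ a ∈ A, ∀ y, a * y ∈ K ↔ y ∈ K := by
      intro a ha y
      exact K.mul_mem_cancel_left (Subgroup.le_normalizer ha)
    rw [← sum_SS A (· ∈ K) hPK, hc, hv, hcK, ← Finset.sum_sub_distrib, ← Finset.sum_sub_distrib,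
      Finset.sum_mul, Finset.mul_sum, Finset.mul_sum, ← Finset.sum_add_distrib,
      ← Finset.sum_add_distrib]
    refine Finset.sum_le_sum fun y hy => ?_
    have hyK : y ∈ K := (Finset.mem_filter.mp hy).2
    by_cases c1 : CC A y
    · have c2 := CC_not_VV hA h5 hne c1
      simp only [c1, c2, if_true, if_false]
      have := hα y c1
      linarith
    · by_cases c2 : VV A y
      · simp only [c1, c2, if_true, if_false]
        have := bound_invert hA hAc h5 hne c2
        linarith
      · simp only [c1, c2, if_false]
        have := hβ y hyK c1 c2
        linarith

end coset
end AvgOrd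

namespace AvgOrd

section coset
variable {G : Type*} [Group G] [Fintype G]
variable {p : ℕ} [hp : Fact p.Prime] {A : Subgroup G}
  (hA : ∀ a ∈ A, a ^ p = 1) (hAc : ∀ a ∈ A, ∀ b ∈ A, a * b = b * a)
  (hmax : ∀ g : G, g ^ p = 1 → (∀ a ∈ A, a * g = g * a) → g ∈ A)

open Classical in
/-- sum of `5 - orderOf` over the normalizer -/
noncomputable def SK (A : Subgroup G) : ℤ :=
  ∑ y ∈ Finset.univ.filter (· ∈ Subgroup.normalizer (A : Set G)), (5 - (orderOf y : ℤ))

open Classical in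
include hA hAc hmax in
theorem total_le (h5 : 5 ≤ p) :
    (p : ℤ) * ∑ y : G, (5 - (orderOf y : ℤ)) ≤
      (p + rr p) * (Nat.card G - Nat.card (Subgroup.normalizer (A : Set G))) + p * SK A := by
  set K := Subgroup.normalizer (A : Set G) with hK
  have hsplit : ∑ y : G, (5 - (orderOf y : ℤ)) =
      SK A + ∑ y ∈ Finset.univ.filter (fun y => ¬ y ∈ K), (5 - (orderOf y : ℤ)) := by
    rw [SK, Finset.sum_filter_add_sum_filter_not]
  have hq : (0 : ℤ) < Nat.card A := by exact_mod_cast Nat.card_pos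
  have hPK : ∀ a ∈ A, ∀ y, ¬ (a * y ∈ K) ↔ ¬ y ∈ K := by
    intro a ha y
    rw [K.mul_mem_cancel_left (Subgroup.le_normalizer ha)]
  have h1 := sum_SS A (fun y => ¬ y ∈ K) hPK
  have h2 : (p : ℤ) * ∑ y ∈ Finset.univ.filter (fun y => ¬ y ∈ K), SS A y ≤
      ∑ y ∈ Finset.univ.filter (fun y => ¬ y ∈ K), (p + rr p : ℤ) * Nat.card A := by
    rw [Finset.mul_sum]
    refine Finset.sum_le_sum fun y hy => ?_
    exact bound_out hA hAc hmax h5 (Finset.mem_filter.mp hy).2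
  have hcnt : ((Finset.univ.filter (fun y => ¬ y ∈ K)).card : ℤ) = Nat.card G - Nat.card K := by
    have := Finset.card_filter_add_card_filter_not (s := (Finset.univ : Finset G)) (· ∈ K)
    rw [Finset.card_univ] at this
    rw [Nat.card_eq_fintype_card, Nat.card_eq_fintype_card, Fintype.card_subtype, ← this]
    push_cast; ring
  rw [h1, Finset.sum_const, nsmul_eq_mul, hcnt] at h2
  have h3 : (Nat.card A : ℤ) * ((p : ℤ) * ∑ y ∈ Finset.univ.filter (fun y => ¬ y ∈ K),
      (5 - (orderOf y : ℤ))) ≤ Nat.card A * ((p + rr p) * (Nat.card G - Nat.card K)) := by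
    linarith
  have h4 := le_of_mul_le_mul_left h3 hq
  rw [hsplit]
  linarith

include hA hAc in
theorem SK_gen (h5 : 5 ≤ p) (hne : A ≠ ⊥) (hq : 5 ≤ Nat.card A) :
    SK A ≤ 2 * Nat.card (Subgroup.normalizer (A : Set G)) := by
  classical
  have hq' : (5 : ℤ) ≤ Nat.card A := by exact_mod_cast hq
  obtain ⟨c, v, -, hv0, hvc, hcv, h⟩ := sum_K hA hAc h5 hne (Nat.card A) (2 * Nat.card A)
    (fun y hy => by
      have := bound_cent hA hAc h5 hy
      have hp5 : (5 : ℤ) ≤ p := by exact_mod_cast h5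
      nlinarith)
    (fun y _ h1 h2 => bound_rest hA hAc h5 h1 h2)
  change (Nat.card A : ℤ) * SK A ≤ _ at h
  have : (Nat.card A : ℤ) * SK A ≤
      Nat.card A * (2 * Nat.card (Subgroup.normalizer (A : Set G))) := by nlinarith
  exact le_of_mul_le_mul_left this (by linarith)

omit [Fintype G] in
/-- a group of prime order: everything is a power of any nontrivial element -/
theorem gen_of_card (hcard : Nat.card A = p) {a0 : G} (ha0 : a0 ∈ A) (h1 : a0 ≠ 1) :
    ∀ a ∈ A, ∃ k : ℤ, a = a0 ^ k := by
  intro a ha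
  have h := mem_zpowers_of_prime_card (G := A) (p := p) hcard (g := ⟨a0, ha0⟩) (g' := ⟨a, ha⟩)
    (by intro h; exact h1 (congrArg Subtype.val h))
  obtain ⟨k, hk⟩ := Subgroup.mem_zpowers_iff.mp h
  exact ⟨k, by simpa using (congrArg Subtype.val hk).symm⟩

omit [Fintype G] in
theorem conj_zpow' (y a : G) (k : ℤ) : y * a ^ k * y⁻¹ = (y * a * y⁻¹) ^ k := by
  simp

omit [Fintype G] in
theorem order_ge_four {A : Subgroup G} (hA : ∀ a ∈ A, a ^ 5 = 1) (hcard : Nat.card A = 5) {y : G}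
    (hy : y ∈ Subgroup.normalizer (A : Set G)) (h1 : ¬ CC A y) (h2 : ¬ VV A y)
    (hpos : 0 < orderOf y) : 4 ≤ orderOf y := by
  have : Fact (Nat.Prime 5) := ⟨by norm_num⟩
  have hnb : A ≠ ⊥ := by
    rintro rfl; simp at hcard
  obtain ⟨a0, ha0, hne⟩ := A.bot_or_exists_ne_one.resolve_left hnb
  have hgen := gen_of_card hcard ha0 hne
  have hord : orderOf a0 = 5 := order_eq_p hA ha0 hne
  obtain ⟨k, hk⟩ := hgen (y * a0 * y⁻¹) ((Subgroup.mem_normalizer_iff.mp hy a0).mp ha0)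
  have hk5 : ∀ m : ℤ, a0 ^ m = 1 ↔ (5 : ℤ) ∣ m := by
    intro m
    rw [← orderOf_dvd_iff_zpow_eq_one, hord]; rfl
  have hC : (5 : ℤ) ∣ k - 1 → False := by
    intro hd
    have e : a0 ^ k = a0 := by
      have := (hk5 _).mpr hd
      rw [zpow_sub_one, mul_inv_eq_one] at this
      exact this
    apply h1
    intro a ha
    obtain ⟨j, rfl⟩ := hgen a ha
    have : y * a0 ^ j * y⁻¹ = a0 ^ j := by rw [conj_zpow', hk, e]
    rw [mul_inv_eq_iff_eq_mul] at this
    exact this.symm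
  have hV : (5 : ℤ) ∣ k + 1 → False := by
    intro hd
    have e : a0 ^ k = a0⁻¹ := by
      have := (hk5 _).mpr hd
      rw [zpow_add_one] at this
      exact eq_inv_of_mul_eq_one_left this
    apply h2
    intro a ha
    obtain ⟨j, rfl⟩ := hgen a ha
    rw [conj_zpow', hk, e, inv_zpow]
  have hk2 : y * (y * a0 * y⁻¹) * y⁻¹ = a0 ^ (k * k) := by
    rw [hk, conj_zpow', hk, zpow_mul]
  have hk3 : y * (y * (y * a0 * y⁻¹) * y⁻¹) * y⁻¹ = a0 ^ (k * k * k) := by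
    rw [hk2, conj_zpow', hk, ← zpow_mul]; congr 1; ring
  by_contra hlt
  have hcases : orderOf y = 1 ∨ orderOf y = 2 ∨ orderOf y = 3 := by omega
  rcases hcases with h | h | h
  · rw [orderOf_eq_one_iff] at h
    apply h1
    intro a _
    simp [h]
  · have hy2 : y * y = 1 := by rw [← pow_two, ← h, pow_orderOf_eq_one]
    have e : y * (y * a0 * y⁻¹) * y⁻¹ = (y * y) * a0 * (y * y)⁻¹ := by simp [mul_assoc]
    rw [e, hy2] at hk2
    have : a0 ^ (k * k - 1) = 1 := by
      rw [zpow_sub_one, ← hk2]; simp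
    rw [hk5] at this
    have hf : k * k - 1 = (k - 1) * (k + 1) := by ring
    rw [hf] at this
    have hp5 : Prime (5 : ℤ) := by norm_num
    rcases hp5.dvd_or_dvd this with h | h
    · exact hC h
    · exact hV h
  · have hy3 : y * y * y = 1 := by
      have := pow_orderOf_eq_one y
      rw [h, pow_succ, pow_two] at this
      exact this
    have e : y * (y * (y * a0 * y⁻¹) * y⁻¹) * y⁻¹ = (y * y * y) * a0 * (y * y * y)⁻¹ := by
      simp [mul_assoc]
    rw [e, hy3] at hk3
    have : a0 ^ (k * k * k - 1) = 1 := by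
      rw [zpow_sub_one, ← hk3]; simp
    rw [hk5] at this
    apply hC
    have hmod : k % 5 = 0 ∨ k % 5 = 1 ∨ k % 5 = 2 ∨ k % 5 = 3 ∨ k % 5 = 4 := by omega
    have h' : (k * k * k - 1) % 5 = 0 := Int.emod_eq_zero_of_dvd this
    rcases hmod with h | h | h | h | h <;>
      simp [Int.sub_emod, Int.mul_emod, h] at h' ⊢ <;> omega

omit [Fintype G] in
include hAc in
theorem CC_of_mul {a y : G} (ha : a ∈ A) (h : CC A (a * y)) : CC A y := by
  intro b hb
  have h1 := h b hb
  rw [← mul_assoc, hAc b hb a ha, mul_assoc, mul_assoc] at h1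
  exact mul_left_cancel h1

theorem SK_five {A : Subgroup G} (hA : ∀ a ∈ A, a ^ 5 = 1)
    (hAc : ∀ a ∈ A, ∀ b ∈ A, a * b = b * a) (hcard : Nat.card A = 5) :
    10 * SK A ≤ 19 * Nat.card (Subgroup.normalizer (A : Set G)) := by
  classical
  have : Fact (Nat.Prime 5) := ⟨by norm_num⟩
  have hnb : A ≠ ⊥ := by
    rintro rfl; simp at hcard
  obtain ⟨c, v, -, hv0, hvc, hcv, h⟩ := sum_K hA hAc le_rfl hnb 4 5
    (fun y hy => by
      have := bound_cent hA hAc le_rfl hy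
      simpa using this)
    (fun y hy h1 h2 => by
      have : (5 : ℤ) = ∑ a : A, 1 := by rw [← card_as_sum, hcard]; rfl
      rw [this]
      refine Finset.sum_le_sum fun a _ => ?_
      have := order_ge_four hA hcard (y := (a : G) * y)
        (Subgroup.mul_mem _ (Subgroup.le_normalizer a.2) hy)
        (fun h => h1 (CC_of_mul hAc a.2 h)) (fun h => h2 (inv_of_mul_inv hAc a.2 h)) (orderOf_pos _)
      omega)
  change (Nat.card A : ℤ) * SK A ≤ _ at h
  rw [hcard] at h
  push_cast at h
  linarith

theorem SK_seven {A : Subgroup G} (hA : ∀ a ∈ A, a ^ 7 = 1)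
    (hAc : ∀ a ∈ A, ∀ b ∈ A, a * b = b * a) (hcard : Nat.card A = 7) :
    14 * SK A ≤ 23 * Nat.card (Subgroup.normalizer (A : Set G)) := by
  classical
  have : Fact (Nat.Prime 7) := ⟨by norm_num⟩
  have hnb : A ≠ ⊥ := by
    rintro rfl; simp at hcard
  obtain ⟨c, v, hc, hv0, hvc, hcv, h⟩ := sum_K hA hAc (by norm_num) hnb (-8) 14
    (fun y hy => by
      have := bound_cent hA hAc (by norm_num) hy
      rw [hcard] at this
      norm_num at this
      exact this)
    (fun y hy h1 h2 => by
      have := bound_rest hA hAc (by norm_num) h1 h2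
      rw [hcard] at this
      norm_num at this
      exact this)
  have hKC : Nat.card (Subgroup.normalizer (A : Set G)) ≤ (Finset.univ.filter (CC A)).card * 6 := by
    obtain ⟨a0, ha0, hne⟩ := A.bot_or_exists_ne_one.resolve_left hnb
    have hgen := gen_of_card hcard ha0 hne
    set K := Subgroup.normalizer (A : Set G) with hK
    let T : Finset G := Finset.univ.filter (· ∈ K)
    have hT : Nat.card K = T.card := by
      rw [Nat.card_eq_fintype_card, Fintype.card_subtype]
    let F : G → G := fun y => y * a0 * y⁻¹
    have h6 : (T.image F).card ≤ 6 := by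
      have hsub : T.image F ⊆ (Finset.univ.filter (· ∈ A)).erase 1 := by
        intro x hx
        obtain ⟨y, hy, rfl⟩ := Finset.mem_image.mp hx
        have hy' : y ∈ K := (Finset.mem_filter.mp hy).2
        rw [Finset.mem_erase]
        constructor
        · intro h
          apply hne
          exact conj_eq_one_iff.mp h
        · simp only [Finset.mem_filter, Finset.mem_univ, true_and]
          exact (Subgroup.mem_normalizer_iff.mp hy' a0).mp ha0
      refine (Finset.card_le_card hsub).trans ?_
      rw [Finset.card_erase_of_mem (by simp [A.one_mem])]
      have : (Finset.univ.filter (· ∈ A)).card = 7 := by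
        rw [← hcard, Nat.card_eq_fintype_card, Fintype.card_subtype]
      omega
    rw [hT]
    refine (Finset.card_le_mul_card_image T (Finset.univ.filter (CC A)).card (f := F) ?_).trans
      (Nat.mul_le_mul_left _ h6)
    intro x hx
    obtain ⟨y0, hy0, rfl⟩ := Finset.mem_image.mp hx
    refine Finset.card_le_card_of_injOn (fun y => y0⁻¹ * y) ?_ ?_
    · intro y hy
      have hy' : F y = F y0 := (Finset.mem_filter.mp hy).2
      simp only [Finset.coe_filter, Finset.mem_univ, true_and, Set.mem_ofPred_eq]
      have e : Commute (y0⁻¹ * y) a0 := by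
        have : y0⁻¹ * (y * a0 * y⁻¹) * y = y0⁻¹ * (y0 * a0 * y0⁻¹) * y := by
          rw [show y * a0 * y⁻¹ = y0 * a0 * y0⁻¹ from hy']
        unfold Commute SemiconjBy
        simpa [mul_assoc] using this
      intro a ha
      obtain ⟨j, rfl⟩ := hgen a ha
      exact (e.zpow_right j).symm.eq
    · intro a _ b _ h
      exact mul_left_cancel h
  have hKC' : (Nat.card (Subgroup.normalizer (A : Set G)) : ℤ) ≤ c * 6 := by
    rw [hc]; exact_mod_cast hKC
  change (Nat.card A : ℤ) * SK A ≤ _ at h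
  rw [hcard] at h
  push_cast at h
  linarith

end coset
end AvgOrd

namespace AvgOrd

section red

open Classical in
theorem quot_sum {G : Type*} [Group G] [Fintype G] (M : Subgroup G) [M.Normal] :
    Nat.card M * ∑ q : G ⧸ M, orderOf q ≤ ∑ x : G, orderOf x := by
  have h1 : ∑ x : G, orderOf (QuotientGroup.mk' M x) ≤ ∑ x : G, orderOf x := by
    apply Finset.sum_le_sum
    intro x _
    exact Nat.le_of_dvd (orderOf_pos x) (orderOf_map_dvd (QuotientGroup.mk' M) x)
  refine le_trans (le_of_eq ?_) h1
  rw [Finset.mul_sum, ← Finset.sum_fiberwise (Finset.univ) (fun x : G => QuotientGroup.mk' M x)]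
  apply Finset.sum_congr rfl
  intro q _
  rw [Finset.sum_congr rfl (g := fun _ => orderOf q)]
  · rw [Finset.sum_const, smul_eq_mul]
    congr 1
    have := QuotientGroup.card_preimage_mk M {q}
    have h2 : Nat.card ({q} : Set (G ⧸ M)) = 1 := Nat.card_unique
    rw [h2, mul_one] at this
    rw [← this, Nat.card_eq_fintype_card, Fintype.card_subtype]
    congr 1
    ext x
    rw [Finset.mem_filter, Finset.mem_filter]
    exact Iff.rfl
  · intro x hx
    rw [(Finset.mem_filter.1 hx).2]

theorem quot_small {G : Type*} [Group G] [Fintype G] (M : Subgroup G) [M.Normal]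
    [Fintype (G ⧸ M)]
    (h : 60 * ∑ x : G, orderOf x < 211 * Nat.card G) :
    60 * ∑ q : G ⧸ M, orderOf q < 211 * Nat.card (G ⧸ M) := by
  have h1 := quot_sum M
  have h2 : Nat.card G = Nat.card M * Nat.card (G ⧸ M) := by
    rw [mul_comm]; exact Subgroup.card_eq_card_quotient_mul_card_subgroup M
  have h3 : 0 < Nat.card M := Nat.card_pos
  have h4 : Nat.card M * ∑ q : G ⧸ M, orderOf q ≤ ∑ x : G, orderOf x := by
    convert h1
  rw [h2] at h
  by_contra hc
  push Not at hc
  have := Nat.mul_le_mul_left (Nat.card M) hc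
  nlinarith

theorem card_quot_lt {G : Type*} [Group G] [Finite G] (M : Subgroup G) (hM : M ≠ ⊥) :
    Nat.card (G ⧸ M) < Nat.card G := by
  rw [Subgroup.card_eq_card_quotient_mul_card_subgroup M]
  have h3 : 1 < Nat.card M := (Subgroup.one_lt_card_iff_ne_bot M).2 hM
  have h4 : 0 < Nat.card (G ⧸ M) := Nat.card_pos
  nlinarith

/-- two normal subgroups with trivial intersection and solvable quotients -/
theorem solvable_of_two {G : Type*} [Group G] (M N : Subgroup G) [M.Normal] [N.Normal]
    (h : M ⊓ N = ⊥) (h1 : Group.IsSolvable (G ⧸ M)) (h2 : Group.IsSolvable (G ⧸ N)) :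
    Group.IsSolvable G := by
  apply Group.isSolvable_of_isSolvable_injective
    (f := (QuotientGroup.mk' M).prod (QuotientGroup.mk' N))
  rw [← MonoidHom.ker_eq_bot_iff, MonoidHom.ker_prod]
  simpa using h

/-- the Sylow core -/
theorem exists_core {K : Type*} [Group K] [Finite K] (p : ℕ) [Fact p.Prime] :
    ∃ R : Subgroup K, R.Characteristic ∧ IsPGroup p R ∧
      ∀ B : Subgroup K, B.Normal → IsPGroup p B → B ≤ R := by
  refine ⟨⨅ P : Sylow p K, (P : Subgroup K), ?_, ?_, ?_⟩
  · rw [Subgroup.characteristic_iff_map_le]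
    intro φ
    refine le_iInf fun P => ?_
    have h1 : (⨅ P : Sylow p K, (P : Subgroup K)) ≤ ((φ⁻¹ : MulAut K) • P : Sylow p K) :=
      iInf_le _ _
    refine (Subgroup.map_mono h1).trans ?_
    rintro _ ⟨x, hx, rfl⟩
    obtain ⟨y, hy, rfl⟩ := hx
    have : (φ : MulAut K) ((φ⁻¹ : MulAut K) y) = y := by
      rw [← MulAut.mul_apply]; simp
    change (φ : MulAut K) ((φ⁻¹ : MulAut K) y) ∈ _
    rw [this]
    exact hy
  · obtain ⟨P⟩ : Nonempty (Sylow p K) := inferInstance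
    exact P.2.to_le (iInf_le _ P)
  · intro B hB hBp
    refine le_iInf fun P => ?_
    obtain ⟨Q, hQ⟩ := hBp.exists_le_sylow
    obtain ⟨g, rfl⟩ := MulAction.exists_smul_eq K Q P
    intro b hb
    have := hB.conj_mem b hb g⁻¹
    refine ⟨_, hQ this, ?_⟩
    simp [MulAut.conj_apply, mul_assoc]

/-- maximal elementary abelian subgroup -/
theorem exists_max {G : Type*} [Group G] [Finite G] (p : ℕ) [hp : Fact p.Prime]
    (hd : p ∣ Nat.card G) :
    ∃ A : Subgroup G, (∀ a ∈ A, a ^ p = 1) ∧ (∀ a ∈ A, ∀ b ∈ A, a * b = b * a) ∧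
      (∀ g : G, g ^ p = 1 → (∀ a ∈ A, a * g = g * a) → g ∈ A) ∧ A ≠ ⊥ := by
  obtain ⟨x, hx⟩ := exists_prime_orderOf_dvd_card' p hd
  let Pr : Subgroup G → Prop := fun A => (∀ a ∈ A, a ^ p = 1) ∧ (∀ a ∈ A, ∀ b ∈ A, a * b = b * a)
  have h0 : Pr (Subgroup.zpowers x) := by
    constructor
    · rintro _ ⟨k, rfl⟩
      change (x ^ k) ^ p = 1
      rw [← zpow_natCast, ← zpow_mul, mul_comm, zpow_mul, zpow_natCast, ← hx, pow_orderOf_eq_one,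
        one_zpow]
    · rintro _ ⟨k, rfl⟩ _ ⟨l, rfl⟩
      exact ((Commute.refl x).zpow_zpow k l).eq
  obtain ⟨A, hle, hA⟩ := Finite.exists_le_maximal h0
  refine ⟨A, hA.1.1, hA.1.2, ?_, ?_⟩
  · intro g hg hc
    have hcomm : ∀ u ∈ Subgroup.closure ((A : Set G) ∪ {g}),
        ∀ v ∈ Subgroup.closure ((A : Set G) ∪ {g}), u * v = v * u := by
      have hbase : ∀ u ∈ ((A : Set G) ∪ {g}), ∀ v ∈ ((A : Set G) ∪ {g}), u * v = v * u := by
        rintro u (hu | rfl) v (hv | rfl)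
        · exact hA.1.2 u hu v hv
        · exact hc u hu
        · exact (hc v hv).symm
        · rfl
      have h1 : Subgroup.closure ((A : Set G) ∪ {g}) ≤ Subgroup.centralizer ((A : Set G) ∪ {g}) := by
        rw [Subgroup.closure_le]
        intro u hu
        rw [SetLike.mem_coe, Subgroup.mem_centralizer_iff]
        intro v hv
        exact hbase v hv u hu
      have h2 : Subgroup.closure ((A : Set G) ∪ {g}) ≤
          Subgroup.centralizer (Subgroup.closure ((A : Set G) ∪ {g}) : Set G) := by
        rw [Subgroup.closure_le]
        intro u hu
        rw [SetLike.mem_coe, Subgroup.mem_centralizer_iff]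
        intro v hv
        exact (Subgroup.mem_centralizer_iff.1 (h1 hv) u hu).symm
      intro u hu v hv
      exact Subgroup.mem_centralizer_iff.1 (h2 hv) u hu
    have hP : Pr (Subgroup.closure ((A : Set G) ∪ {g})) := by
      refine ⟨?_, hcomm⟩
      intro a ha
      induction ha using Subgroup.closure_induction with
      | mem x hx =>
        rcases hx with hx | rfl
        · exact hA.1.1 x hx
        · exact hg
      | one => simp
      | mul x y hx hy h1 h2 =>
        have : Commute x y := hcomm x hx y hy
        rw [this.mul_pow, h1, h2, one_mul]
      | inv x hx h1 => rw [inv_pow, h1, inv_one]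
    have hle2 : A ≤ Subgroup.closure ((A : Set G) ∪ {g}) := fun a ha =>
      Subgroup.subset_closure (Or.inl ha)
    exact hA.2 hP hle2 (Subgroup.subset_closure (Or.inr rfl))
  · rintro rfl
    have : x ∈ (⊥ : Subgroup G) := hle (Subgroup.mem_zpowers x)
    rw [Subgroup.mem_bot] at this
    rw [this, orderOf_one] at hx
    exact hp.1.one_lt.ne hx

end red

end AvgOrd

namespace AvgOrd

section red2

/-- the core of the normalizer of `A` is trivial in a minimal counterexample -/
theorem core_trivial {G : Type*} [Group G] [Finite G] (hns : ¬ Group.IsSolvable G)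
    (hq : ∀ M : Subgroup G, ∀ _ : M.Normal, M ≠ ⊥ → Group.IsSolvable (G ⧸ M))
    {p : ℕ} [Fact p.Prime] (A : Subgroup G) (hAp : IsPGroup p A) (hA0 : A ≠ ⊥) :
    (Subgroup.normalizer (A : Set G)).normalCore = ⊥ := by
  have F2 : ∀ M : Subgroup G, M.Normal → Group.IsSolvable M → M = ⊥ := by
    intro M hM hs
    by_contra hne
    exact hns ((Group.isSolvable_iff_subgroup_quotient M).2 ⟨hs, hq M hM hne⟩)
  have F3 : ∀ M N : Subgroup G, M.Normal → N.Normal → M ≠ ⊥ → M ⊓ N = ⊥ → N = ⊥ := by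
    intro M N hM hN h1 h
    by_contra h2
    exact hns (solvable_of_two M N h (hq M hM h1) (hq N hN h2))
  set K := Subgroup.normalizer (A : Set G) with hK
  set K0 := K.normalCore with hK0
  by_contra hne
  have hK0K : K0 ≤ K := Subgroup.normalCore_le K
  have hK0n : K0.Normal := Subgroup.normalCore_normal K
  obtain ⟨R, hRc, hRp, hRmax⟩ := exists_core (K := K0) p
  have hRn : (R.map K0.subtype).Normal := ConjAct.normal_of_characteristic_of_normal
  have hRbot : R.map K0.subtype = ⊥ := by
    apply F2 _ hRn
    have hp' : IsPGroup p (R.map K0.subtype) := hRp.map _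
    have := hp'.isNilpotent
    infer_instance
  have hR : R = ⊥ := by
    rwa [Subgroup.map_eq_bot_iff_of_injective _ K0.subtype_injective] at hRbot
  have hB : A.subgroupOf K0 = ⊥ := by
    rw [eq_bot_iff, ← hR]
    apply hRmax
    · exact Subgroup.normal_subgroupOf_of_le_normalizer hK0K
    · exact hAp.comap_of_injective K0.subtype K0.subtype_injective
  have hdisj : A ⊓ K0 = ⊥ := by
    rw [eq_bot_iff]
    intro x hx
    have : (⟨x, hx.2⟩ : K0) ∈ A.subgroupOf K0 := Subgroup.mem_subgroupOf.2 hx.1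
    rw [hB, Subgroup.mem_bot] at this
    rw [Subgroup.mem_bot]
    exact congrArg Subtype.val this
  have hAC : A ≤ Subgroup.centralizer (K0 : Set G) := by
    intro a ha
    rw [Subgroup.mem_centralizer_iff]
    intro k hk
    have h1 : k * a * k⁻¹ ∈ A := (Subgroup.mem_normalizer_iff.1 (hK0K hk) a).1 ha
    have h2 : a * k⁻¹ * a⁻¹ ∈ K0 := hK0n.conj_mem _ (K0.inv_mem hk) a
    have h3 : k * a * k⁻¹ * a⁻¹ ∈ A ⊓ K0 := by
      refine ⟨A.mul_mem h1 (A.inv_mem ha), ?_⟩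
      have := K0.mul_mem hk h2
      simpa [mul_assoc] using this
    rw [hdisj, Subgroup.mem_bot] at h3
    rw [mul_inv_eq_one, mul_inv_eq_iff_eq_mul] at h3
    exact h3
  have hCn : (Subgroup.centralizer (K0 : Set G)).Normal := inferInstance
  have hinteg : K0 ⊓ Subgroup.centralizer (K0 : Set G) = ⊥ := by
    apply F2 _ inferInstance
    have : IsMulCommutative (K0 ⊓ Subgroup.centralizer (K0 : Set G) : Subgroup G) := by
      refine ⟨⟨?_⟩⟩
      rintro ⟨x, hx⟩ ⟨y, hy⟩
      apply Subtype.ext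
      exact Subgroup.mem_centralizer_iff.1 hy.2 x hx.1
    exact Group.isSolvable_of_comm (fun a b => this.1.1 a b)
  have := F3 _ _ hK0n hCn hne hinteg
  rw [this] at hAC
  exact hA0 (le_bot_iff.1 hAC)

theorem card_dvd_factorial {G : Type*} [Group G] [Finite G] (K : Subgroup G)
    (h : K.normalCore = ⊥) : Nat.card G ∣ K.index.factorial := by
  classical
  rw [Subgroup.normalCore_eq_ker, MonoidHom.ker_eq_bot_iff] at h
  have := Subgroup.card_dvd_of_injective _ h
  rwa [Nat.card_perm] at this

theorem sylow_index {G : Type*} [Group G] [Finite G] {p : ℕ} [Fact p.Prime] (A : Subgroup G)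
    (hA : Nat.card A = p) (h2 : ¬ p ^ 2 ∣ Nat.card G) :
    (Subgroup.normalizer (A : Set G)).index ≡ 1 [MOD p] := by
  have hd : p ∣ Nat.card G := hA ▸ Subgroup.card_subgroup_dvd_card A
  have hf : (Nat.card G).factorization p = 1 := by
    have hp : p.Prime := Fact.out
    have h0 : Nat.card G ≠ 0 := Nat.card_pos.ne'
    rw [hp.pow_dvd_iff_le_factorization h0] at h2
    have h1 := (hp.dvd_iff_one_le_factorization h0).1 hd
    omega
  let P : Sylow p G := Sylow.ofCard A (by rw [hf, hA, pow_one])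
  have h3 := card_sylow_modEq_one p G
  rw [Sylow.card_eq_index_normalizer P] at h3
  exact h3

theorem main_step {G : Type*} [Group G] [Fintype G]
    (hB : (∀ p : ℕ, p.Prime → p ∣ Nat.card G → p ≤ 3) → Group.IsSolvable G)
    (h : 60 * ∑ x : G, orderOf x < 211 * Nat.card G)
    (hq : ∀ M : Subgroup G, ∀ _ : M.Normal, M ≠ ⊥ → Group.IsSolvable (G ⧸ M)) :
    Group.IsSolvable G := by
  by_contra hns
  obtain ⟨p, hp, hpd, hp3⟩ : ∃ p : ℕ, p.Prime ∧ p ∣ Nat.card G ∧ 3 < p := by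
    by_contra hc
    push Not at hc
    exact hns (hB hc)
  have h5 : 5 ≤ p := by
    by_contra hlt
    have : p = 4 := by omega
    subst this
    revert hp; decide
  have : Fact p.Prime := ⟨hp⟩
  obtain ⟨A, hA, hAc, hmax, hA0⟩ := exists_max p hpd
  have hAp : IsPGroup p A := by
    intro a
    exact ⟨1, by rw [pow_one]; exact Subtype.ext (hA a a.2)⟩
  obtain ⟨n, hn⟩ := IsPGroup.iff_card.1 hAp
  have hn0 : n ≠ 0 := by
    rintro rfl
    rw [pow_zero] at hn
    exact hA0 ((Subgroup.card_eq_one).1 hn)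
  have hAge : p ≤ Nat.card A := by
    rw [hn]; exact Nat.le_self_pow hn0 p
  have hcore := core_trivial hns hq A hAp hA0
  have hdvd := card_dvd_factorial _ hcore
  have hi1 : (Subgroup.normalizer (A : Set G)).index ≠ 1 := by
    intro h1
    rw [Subgroup.index_eq_one] at h1
    have h2 := core_trivial hns hq A hAp hA0
    rw [h1] at h2
    have : (⊤ : Subgroup G).normalCore = ⊤ := Subgroup.normalCore_eq_self ⊤
    rw [this] at h2
    have hle : A ≤ ⊥ := h2 ▸ le_top
    exact hA0 (le_bot_iff.1 hle)
  have hT := total_le hA hAc hmax h5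
  have hS2 := SK_gen hA hAc h5 hA0 (h5.trans hAge)
  have hcardA : Nat.card A ∣ Nat.card G := Subgroup.card_subgroup_dvd_card A
  have hGK : (Nat.card G : ℤ) = (Subgroup.normalizer (A : Set G)).index *
      Nat.card (Subgroup.normalizer (A : Set G)) := by
    exact_mod_cast (Subgroup.index_mul_card _).symm
  have hS5 := fun hh : p = 5 => fun hc : Nat.card A = 5 => SK_five (A := A) (hh ▸ hA) hAc hc
  have hS7 := fun hh : p = 7 => fun hc : Nat.card A = 7 => SK_seven (A := A) (hh ▸ hA) hAc hc
  have hidx : Nat.card A = p → ¬ p ^ 2 ∣ Nat.card G → _ := sylow_index (p := p) A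
  set i := (Subgroup.normalizer (A : Set G)).index with hi
  have hKpos : (0 : ℤ) < Nat.card (Subgroup.normalizer (A : Set G)) := by
    exact_mod_cast Nat.card_pos
  set k : ℤ := ((Nat.card (Subgroup.normalizer (A : Set G)) : ℕ) : ℤ) with hk
  have hS : 89 * (Nat.card G : ℤ) < 60 * ∑ y : G, (5 - (orderOf y : ℤ)) := by
    rw [Finset.sum_sub_distrib, Finset.sum_const, Finset.card_univ, ← Nat.card_eq_fintype_card]
    have : (60 : ℤ) * ∑ x : G, (orderOf x : ℤ) < 211 * (Nat.card G : ℤ) := by exact_mod_cast h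
    simp only [nsmul_eq_mul]
    linarith
  set S : ℤ := ∑ y : G, (5 - (orderOf y : ℤ)) with hSd
  rw [hGK] at hT hS
  -- numeric
  have hpz : (0 : ℤ) < p := by exact_mod_cast hp.pos
  have key : (89 * p) * ((i : ℤ) * k) < 60 * ((p + rr p) * ((i : ℤ) * k - k) + p * SK A) := by
    have := mul_lt_mul_of_pos_left hS hpz
    nlinarith
  have key2 : (89 * p) * (i : ℤ) < 60 * ((p + rr p) * ((i : ℤ) - 1) + p * 2) := by
    have : ((89 * p) * (i : ℤ)) * k < (60 * ((p + rr p) * ((i : ℤ) - 1) + p * 2)) * k := by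
      nlinarith [mul_le_mul_of_nonneg_left hS2 hpz.le]
    exact lt_of_mul_lt_mul_right this hKpos.le
  have hAlt : ¬ p ^ 2 ∣ Nat.card G → Nat.card A = p := by
    intro hnd
    have : n < 2 := by
      by_contra hc
      push Not at hc
      apply hnd
      exact (pow_dvd_pow p hc).trans (hn ▸ hcardA)
    have : n = 1 := by omega
    rw [hn, this, pow_one]
  rcases Nat.lt_or_ge p 11 with hlt | hge
  · have hp57 : p = 5 ∨ p = 7 := by
      interval_cases p <;> first | (left; rfl) | (right; rfl) | (exfalso; revert hp; decide)
    rcases hp57 with rfl | rfl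
    · have hr : (rr 5 : ℤ) = 2 := by simp [rr]
      rw [hr] at key key2
      have hi7 : i ≤ 7 := by
        have : (i : ℤ) < 8 := by push_cast at key2; linarith
        omega
      have hnd : ¬ 5 ^ 2 ∣ Nat.card G := by
        intro hc
        have := (hc.trans hdvd).trans (Nat.factorial_dvd_factorial hi7)
        revert this; decide
      have hcA := hAlt hnd
      have hmod := hidx hcA hnd
      have hi6 : i = 6 ∨ i = 1 := by
        unfold Nat.ModEq at hmod; omega
      rcases hi6 with hi6 | hi6
      · have := hS5 rfl hcA
        rw [hi6] at key
        push_cast at key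
        linarith
      · exact hi1 hi6
    · have hr : (rr 7 : ℤ) = 3 := by simp [rr]
      rw [hr] at key key2
      have hi7 : i ≤ 10 := by
        have : (i : ℤ) < 11 := by push_cast at key2; linarith
        omega
      have hnd : ¬ 7 ^ 2 ∣ Nat.card G := by
        intro hc
        have := (hc.trans hdvd).trans (Nat.factorial_dvd_factorial hi7)
        revert this; decide
      have hcA := hAlt hnd
      have hmod := hidx hcA hnd
      have hi6 : i = 8 ∨ i = 1 := by
        unfold Nat.ModEq at hmod; omega
      rcases hi6 with hi6 | hi6
      · have := hS7 rfl hcA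
        rw [hi6] at key
        push_cast at key
        linarith
      · exact hi1 hi6
  · have hr : 19 * (rr p : ℤ) ≤ 8 * p := by
      have : rr p = 8 * p / 19 := by
        unfold rr
        rw [if_neg (by omega), if_neg (by omega)]
      rw [this]
      omega
    have hipos : 1 ≤ (i : ℤ) := by
      by_contra hc
      have : i = 0 := by omega
      rw [this] at hGK
      have : (0 : ℤ) < Nat.card G := by exact_mod_cast Nat.card_pos
      simp at hGK
    have hi9 : i ≤ 9 := by
      by_contra hc
      have hc : (10 : ℤ) ≤ i := by omega
      have h1 : 19 * (rr p : ℤ) * (i - 1) ≤ 8 * p * (i - 1) :=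
        mul_le_mul_of_nonneg_right hr (by linarith)
      have h2 : 10 * (p : ℤ) ≤ p * i := by nlinarith
      nlinarith
    have := (hp.dvd_factorial).1 (hpd.trans hdvd)
    omega

theorem main_red (hB : ∀ (G : Type u) [Group G] [Finite G],
      (∀ p : ℕ, p.Prime → p ∣ Nat.card G → p ≤ 3) → Group.IsSolvable G) :
    ∀ n : ℕ, ∀ (G : Type u) [Group G] [Fintype G], Nat.card G = n →
      60 * ∑ x : G, orderOf x < 211 * Nat.card G → Group.IsSolvable G := by
  intro n
  induction n using Nat.strong_induction_on with
  | _ n ih =>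
    intro G _ _ hn h
    apply main_step (hB G) h
    intro M hM hne
    have := Fintype.ofFinite (G ⧸ M)
    exact ih _ (hn ▸ card_quot_lt M hne) (G ⧸ M) rfl (quot_small M h)

end red2

end AvgOrd

namespace AvgOrd

section burnside1

/-- average of roots of unity that is a nonzero algebraic integer has norm one -/
theorem norm_avg_eq_one {ι : Type*} [Fintype ι] [Nonempty ι] (l : ι → ℂ) {N : ℕ} (hN : 0 < N)
    (hl : ∀ j, l j ^ N = 1) (a : ℂ) (ha : (Fintype.card ι : ℂ) * a = ∑ j, l j)
    (hinteg : IsIntegral ℤ a) (ha0 : a ≠ 0) : ‖a‖ = 1 := by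
  have hlint : ∀ j, IsIntegral ℚ (l j) := by
    intro j
    exact IsIntegral.of_pow hN (by rw [hl j]; exact isIntegral_one)
  let K : IntermediateField ℚ ℂ := IntermediateField.adjoin ℚ (Set.range l)
  have hfd : FiniteDimensional ℚ K := by
    apply IntermediateField.finiteDimensional_adjoin
    rintro _ ⟨j, rfl⟩
    exact hlint j
  have : NumberField K := { to_charZero := inferInstance, to_finiteDimensional := hfd }
  have hlK : ∀ j, l j ∈ K := fun j => IntermediateField.subset_adjoin ℚ _ ⟨j, rfl⟩
  have hd : (Fintype.card ι : ℂ) ≠ 0 := by exact_mod_cast Fintype.card_ne_zero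
  have haK : a ∈ K := by
    have : a = (∑ j, l j) / (Fintype.card ι : ℂ) := by
      rw [← ha]; field_simp
    rw [this]
    exact K.div_mem (K.sum_mem fun j _ => hlK j) (natCast_mem K _)
  let x : K := ⟨a, haK⟩
  have hx : (Fintype.card ι : K) * x = ∑ j, (⟨l j, hlK j⟩ : K) := by
    apply Subtype.ext
    push_cast
    exact ha
  have hx0 : x ≠ 0 := fun h => ha0 (congrArg Subtype.val h)
  have hxi : IsIntegral ℤ x := by
    have := isIntegral_algebraMap_iff (R := ℤ) (A := K) (B := ℂ) (x := x)
      (algebraMap K ℂ).injective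
    exact this.1 hinteg
  obtain ⟨n, hn, h1⟩ := NumberField.Embeddings.pow_eq_one_of_norm_le_one K ℂ hx0 hxi (by
    intro φ
    have h2 := congrArg φ hx
    rw [map_mul, map_natCast, map_sum] at h2
    have h3 : ∀ j, ‖φ (⟨l j, hlK j⟩ : K)‖ = 1 := by
      intro j
      have : (φ (⟨l j, hlK j⟩ : K)) ^ N = 1 := by
        rw [← map_pow]
        have : (⟨l j, hlK j⟩ : K) ^ N = 1 := Subtype.ext (hl j)
        rw [this, map_one]
      exact Complex.norm_eq_one_of_pow_eq_one this hN.ne'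
    have h4 : ‖(Fintype.card ι : ℂ) * φ x‖ ≤ Fintype.card ι := by
      rw [h2]
      refine (norm_sum_le _ _).trans ?_
      simp [h3]
    rw [norm_mul, Complex.norm_natCast] at h4
    have hpos : (0 : ℝ) < Fintype.card ι := by exact_mod_cast Fintype.card_pos
    nlinarith)
  have : a ^ n = 1 := congrArg Subtype.val h1
  exact Complex.norm_eq_one_of_pow_eq_one this hn.ne'

theorem all_eq_of_avg {ι : Type*} [Fintype ι] (l : ι → ℂ) (hl : ∀ j, ‖l j‖ = 1)
    (a : ℂ) (ha : (Fintype.card ι : ℂ) * a = ∑ j, l j) (h1 : ‖a‖ = 1) : ∀ j, l j = a := by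
  have hre : ∀ j, (l j * (starRingEnd ℂ) a).re ≤ 1 := by
    intro j
    refine (Complex.re_le_norm _).trans ?_
    rw [norm_mul, hl, Complex.norm_conj, h1, one_mul]
  have haa : a * (starRingEnd ℂ) a = 1 := by
    rw [Complex.mul_conj, Complex.normSq_eq_norm_sq, h1]; simp
  have hsum : ∑ j, (l j * (starRingEnd ℂ) a).re = ∑ j : ι, (1 : ℝ) := by
    rw [← Complex.re_sum, ← Finset.sum_mul, ← ha, mul_assoc, haa]
    simp
  intro j
  have h2 := (Finset.sum_eq_sum_iff_of_le (fun j _ => hre j)).1 hsum j (Finset.mem_univ j)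
  have h3 : ‖l j * (starRingEnd ℂ) a‖ = 1 := by
    rw [norm_mul, hl, Complex.norm_conj, h1, one_mul]
  have h4 : l j * (starRingEnd ℂ) a = 1 := by
    have h5 := Complex.normSq_eq_norm_sq (l j * (starRingEnd ℂ) a)
    rw [h3, Complex.normSq_apply, h2] at h5
    apply Complex.ext
    · exact h2
    · rw [Complex.one_im]; nlinarith
  calc l j = l j * (a * (starRingEnd ℂ) a) := by rw [haa, mul_one]
    _ = (l j * (starRingEnd ℂ) a) * a := by ring
    _ = a := by rw [h4, one_mul]

open Polynomial in
theorem root_pow {d : ℕ} (M : Matrix (Fin d) (Fin d) ℂ) {N : ℕ} (hM : M ^ N = 1)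
    {r : ℂ} (hr : r ∈ M.charpoly.roots) : r ^ N = 1 := by
  have h1 : r ∈ spectrum ℂ M := by
    rw [Matrix.mem_spectrum_iff_isRoot_charpoly]
    exact (mem_roots'.1 hr).2
  have h2 : r ^ N ∈ spectrum ℂ (M ^ N) := spectrum.pow_mem_pow M N h1
  rw [hM] at h2
  by_contra hne
  apply h2
  have : (algebraMap ℂ (Matrix (Fin d) (Fin d) ℂ)) (r ^ N) - 1 =
      (algebraMap ℂ (Matrix (Fin d) (Fin d) ℂ)) (r ^ N - 1) := by
    rw [map_sub, map_one]
  rw [spectrum.mem_resolventSet_iff, this]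
  exact (IsUnit.mk0 _ (sub_ne_zero.2 hne)).map _

theorem trace_integral {d : ℕ} (M : Matrix (Fin d) (Fin d) ℂ) {N : ℕ} (hN : 0 < N)
    (hM : M ^ N = 1) : IsIntegral ℤ M.trace := by
  rw [Matrix.trace_eq_sum_roots_charpoly]
  apply IsIntegral.multiset_sum
  intro r hr
  exact IsIntegral.of_pow hN (by rw [root_pow M hM hr]; exact isIntegral_one)

open Polynomial in
theorem scalar_of_integral {d : ℕ} (hd : d ≠ 0) (M : Matrix (Fin d) (Fin d) ℂ) {N : ℕ}
    (hN : 0 < N) (hM : M ^ N = 1) (a : ℂ) (ha : (d : ℂ) * a = M.trace)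
    (hinteg : IsIntegral ℤ a) (ha0 : a ≠ 0) : M = algebraMap ℂ _ a := by
  classical
  set s := M.charpoly.roots with hs
  have hcard : Multiset.card s = d := by
    rw [hs, splits_iff_card_roots.1 (IsAlgClosed.splits _), Matrix.charpoly_natDegree_eq_dim]
    simp
  have hcardι : Fintype.card s = d := by simp [hcard]
  have hne : Nonempty s := by
    rw [← Fintype.card_pos_iff, hcardι]; omega
  have hsum : (Fintype.card s : ℂ) * a = ∑ j : s, (j.1 : ℂ) := by
    rw [hcardι, ha, Matrix.trace_eq_sum_roots_charpoly]
    conv_lhs => rw [← hs, ← Multiset.map_univ_coe s]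
    rfl
  have hpow : ∀ j : s, (j.1 : ℂ) ^ N = 1 := fun j => root_pow M hM (Multiset.coe_mem)
  have h1 := norm_avg_eq_one (fun j : s => (j.1 : ℂ)) hN hpow a hsum hinteg ha0
  have h2 := all_eq_of_avg (fun j : s => (j.1 : ℂ))
    (fun j => Complex.norm_eq_one_of_pow_eq_one (hpow j) hN.ne') a hsum h1
  have h3 : ∀ r ∈ s, r = a := by
    intro r hr
    have := h2 ⟨r, ⟨0, Multiset.count_pos.2 hr⟩⟩
    exact this
  have hdiv : minpoly ℂ M ∣ X ^ N - C 1 := by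
    apply minpoly.dvd
    simp [hM]
  have hX : (X ^ N - C (1 : ℂ)) ≠ 0 := X_pow_sub_C_ne_zero hN 1
  have hsep : (minpoly ℂ M).Separable :=
    Separable.of_dvd (separable_X_pow_sub_C (1 : ℂ) (by exact_mod_cast hN.ne') one_ne_zero) hdiv
  have hinteg' : IsIntegral ℂ M := Matrix.isIntegral M
  have hroots : (minpoly ℂ M).roots ≤ {a} := by
    rw [Multiset.le_iff_subset (nodup_roots hsep)]
    intro r hr
    rw [Multiset.mem_singleton]
    apply h3
    rw [hs, mem_roots (Matrix.charpoly_monic M).ne_zero]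
    exact (mem_roots'.1 hr).2.dvd (Matrix.minpoly_dvd_charpoly M)
  have hprod : minpoly ℂ M ∣ X - C a := by
    rw [(IsAlgClosed.splits (minpoly ℂ M)).eq_prod_roots_of_monic (minpoly.monic hinteg')]
    have := Multiset.prod_dvd_prod_of_le (Multiset.map_le_map (f := fun b => X - C b) hroots)
    simpa using this
  obtain ⟨c, hc⟩ := hprod
  have h4 := congrArg (aeval M) hc
  rw [map_mul, minpoly.aeval, zero_mul, map_sub, aeval_X, aeval_C] at h4
  exact sub_eq_zero.1 h4

end burnside1

end AvgOrd

namespace AvgOrd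

section burnside2

open MonoidAlgebra

variable {G : Type*} [Group G]

theorem central_scalar {d : ℕ}
    (f : MonoidAlgebra ℂ G →ₐ[ℂ] Matrix (Fin d) (Fin d) ℂ) (hf : Function.Surjective f)
    (c : MonoidAlgebra ℂ G) (hc : ∀ h : G, single h (1 : ℂ) * c = c * single h 1) :
    ∃ μ : ℂ, f c = algebraMap ℂ _ μ := by
  have hall : ∀ x : MonoidAlgebra ℂ G, x * c = c * x := by
    intro x
    induction x using MonoidAlgebra.induction_linear with
    | zero => simp
    | add x y hx hy => rw [add_mul, mul_add, hx, hy]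
    | single m r =>
      have : (single m r : MonoidAlgebra ℂ G) = r • single m 1 := by
        rw [smul_single, smul_eq_mul, mul_one]
      rw [this, smul_mul_assoc, mul_smul_comm, hc]
  have : f c ∈ Set.range (Matrix.scalar (Fin d)) := by
    rw [Matrix.mem_range_scalar_iff_commute_single']
    intro i j
    obtain ⟨x, hx⟩ := hf (Matrix.single i j 1)
    rw [← hx]
    change f x * f c = f c * f x
    rw [← map_mul, ← map_mul, hall]
  obtain ⟨μ, hμ⟩ := this
  exact ⟨μ, hμ.symm⟩

open Classical in
theorem conj_sum [Fintype G] (R : Type*) [CommRing R] (g h : G) :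
    single h (1 : R) * (∑ x ∈ Finset.univ.filter (fun x : G => IsConj g x), single x (1 : R)) =
      (∑ x ∈ Finset.univ.filter (fun x : G => IsConj g x), single x (1 : R)) * single h 1 := by
  rw [Finset.mul_sum, Finset.sum_mul]
  have key : ∀ h x : G, IsConj g x → IsConj g (h * x * h⁻¹) := by
    intro h x hx
    exact hx.trans (isConj_iff.2 ⟨h, rfl⟩)
  refine Finset.sum_bij' (fun x _ => h * x * h⁻¹) (fun x _ => h⁻¹ * x * h) ?_ ?_ ?_ ?_ ?_
  · intro x hx
    simp only [Finset.mem_filter, Finset.mem_univ, true_and] at hx ⊢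
    exact key h x hx
  · intro x hx
    simp only [Finset.mem_filter, Finset.mem_univ, true_and] at hx ⊢
    simpa using key h⁻¹ x hx
  · intro x _
    group
  · intro x _
    group
  · intro x _
    rw [single_mul_single, single_mul_single]
    simp [mul_assoc]

open Classical in
theorem class_integral [Fintype G] {d : ℕ} (hd : d ≠ 0)
    (f : MonoidAlgebra ℂ G →ₐ[ℂ] Matrix (Fin d) (Fin d) ℂ) (hf : Function.Surjective f) (g : G) :
    ∃ μ : ℂ, IsIntegral ℤ μ ∧
      (d : ℂ) * μ = (Nat.card {x : G // IsConj g x} : ℂ) * (f (single g 1)).trace := by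
  obtain ⟨μ, hμ⟩ := central_scalar f hf _ (conj_sum ℂ g)
  have : NeZero d := ⟨hd⟩
  refine ⟨μ, ?_, ?_⟩
  · have h1 : IsIntegral ℤ
        (∑ x ∈ Finset.univ.filter (fun x : G => IsConj g x), (single x 1 : MonoidAlgebra ℤ G)) :=
      IsIntegral.of_finite ℤ _
    have h2 := h1.map (mapRingHom G (Int.castRingHom ℂ)).toIntAlgHom
    have h3 := h2.map f.toRingHom.toIntAlgHom
    have h4 : f.toRingHom.toIntAlgHom ((mapRingHom G (Int.castRingHom ℂ)).toIntAlgHom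
        (∑ x ∈ Finset.univ.filter (fun x : G => IsConj g x), (single x 1 : MonoidAlgebra ℤ G))) =
        algebraMap ℂ _ μ := by
      rw [← hμ]
      change f (mapRingHom G (Int.castRingHom ℂ) _) = _
      rw [map_sum]
      simp only [mapRingHom_single, map_one]
    rw [h4] at h3
    exact (isIntegral_algebraMap_iff (FaithfulSMul.algebraMap_injective ℂ _)).1 h3
  · have h1 := congrArg Matrix.trace hμ
    rw [map_sum, Matrix.trace_sum] at h1
    have h2 : ∀ x ∈ Finset.univ.filter (fun x : G => IsConj g x),
        (f (single x 1)).trace = (f (single g 1)).trace := by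
      intro x hx
      simp only [Finset.mem_filter, Finset.mem_univ, true_and] at hx
      obtain ⟨c, rfl⟩ := isConj_iff.1 hx
      have : (single (c * g * c⁻¹) 1 : MonoidAlgebra ℂ G) =
          single c 1 * single g 1 * single c⁻¹ 1 := by
        rw [single_mul_single, single_mul_single]; simp
      rw [this, map_mul, Matrix.trace_mul_comm, ← map_mul, ← mul_assoc, single_mul_single]
      have h1 : (single (c⁻¹ * c) (1 * 1) : MonoidAlgebra ℂ G) = 1 := by
        rw [inv_mul_cancel, one_mul]; rfl
      rw [h1, one_mul]
    rw [Finset.sum_congr rfl h2, Finset.sum_const, nsmul_eq_mul] at h1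
    rw [Nat.card_eq_fintype_card, Fintype.card_subtype, h1, Matrix.algebraMap_eq_diagonal]
    simp [Matrix.trace_diagonal]

/-- The trace of left multiplication on the group algebra. -/
theorem trace_group [Finite G] (g : G) (hg : g ≠ 1) :
    LinearMap.trace ℂ (MonoidAlgebra ℂ G) (LinearMap.mulLeft ℂ (single g 1)) = 0 := by
  classical
  have := Fintype.ofFinite G
  rw [LinearMap.trace_eq_matrix_trace ℂ (MonoidAlgebra.basis G ℂ), Matrix.trace]
  apply Finset.sum_eq_zero
  intro x _
  rw [Matrix.diag_apply, LinearMap.toMatrix_apply]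
  simp [MonoidAlgebra.basis, single_mul_single, hg]

theorem trace_pi {n : ℕ} (d : Fin n → ℕ) (a : Π i, Matrix (Fin (d i)) (Fin (d i)) ℂ) :
    LinearMap.trace ℂ (Π i, Matrix (Fin (d i)) (Fin (d i)) ℂ) (LinearMap.mulLeft ℂ a) =
      ∑ i, (d i : ℂ) * (a i).trace := by
  classical
  rw [LinearMap.trace_eq_matrix_trace ℂ (Pi.basis fun i => Matrix.stdBasis ℂ (Fin (d i)) (Fin (d i))),
    Matrix.trace, Fintype.sum_sigma]
  apply Finset.sum_congr rfl
  intro i _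
  rw [Fintype.sum_prod_type]
  simp only [Matrix.diag_apply, LinearMap.toMatrix_apply, Pi.basis_repr, Pi.basis_apply,
    LinearMap.mulLeft_apply, Pi.mul_apply, Pi.single_eq_same, Matrix.stdBasis_eq_single]
  have : ∀ j k : Fin (d i), ((Matrix.stdBasis ℂ (Fin (d i)) (Fin (d i))).repr
      (a i * Matrix.single j k 1)) (j, k) = a i j j := by
    intro j k
    change (a i * (Matrix.single j k 1 : Matrix (Fin (d i)) (Fin (d i)) ℂ)) j k = _
    simp
  simp only [this]
  simp [Matrix.trace, Finset.mul_sum]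

theorem trace_sum [Finite G] {n : ℕ} (d : Fin n → ℕ)
    (e : MonoidAlgebra ℂ G ≃ₐ[ℂ] Π i, Matrix (Fin (d i)) (Fin (d i)) ℂ) (g : G) (hg : g ≠ 1) :
    ∑ i, (d i : ℂ) * (e (single g 1) i).trace = 0 := by
  rw [← trace_pi, ← trace_group g hg,
    ← LinearMap.trace_conj' (LinearMap.mulLeft ℂ (single g (1 : ℂ))) e.toLinearEquiv]
  congr 1
  refine LinearMap.ext fun x => ?_
  rw [LinearEquiv.conj_apply_apply]
  change e (single g 1) * x = e (single g 1 * e.symm x)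
  rw [map_mul, AlgEquiv.apply_symm_apply]

end burnside2

end AvgOrd

namespace AvgOrd

section burnside3

open MonoidAlgebra

theorem not_integral_inv {q : ℕ} (hq : q.Prime) (T : ℂ) (hT : IsIntegral ℤ T) :
    (1 : ℂ) + q * T ≠ 0 := by
  intro h
  have hq0 : (q : ℂ) ≠ 0 := by exact_mod_cast hq.ne_zero
  have hTq : T = algebraMap ℚ ℂ (-(1 / q : ℚ)) := by
    have : (q : ℂ) * T = -1 := by linear_combination h
    simp only [one_div, map_neg, map_inv₀, map_natCast]
    field_simp
    linear_combination this
  rw [hTq] at hT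
  have h2 := (isIntegral_algebraMap_iff (algebraMap ℚ ℂ).injective).1 hT
  obtain ⟨y, hy⟩ := IsIntegrallyClosed.isIntegral_iff.1 h2
  have hq1 : (q : ℚ) ≠ 0 := by exact_mod_cast hq.ne_zero
  have h3 : (q : ℚ) * y = -1 := by
    have : (y : ℚ) = -(1 / q) := hy
    rw [this]; field_simp
  have h4 : (q : ℤ) * y = -1 := by exact_mod_cast h3
  have h5 : (q : ℤ) ∣ 1 := ⟨-y, by linarith⟩
  have h6 : q ∣ 1 := by exact_mod_cast h5
  exact hq.one_lt.ne' (Nat.dvd_one.1 h6)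

variable {G : Type*} [Group G]

theorem triv_scalar {d : ℕ} (f : MonoidAlgebra ℂ G →ₐ[ℂ] Matrix (Fin d) (Fin d) ℂ)
    (ht : ∀ h : G, f (single h 1) = 1) (x : MonoidAlgebra ℂ G) :
    f x = algebraMap ℂ _ (MonoidAlgebra.lift ℂ ℂ G (1 : G →* ℂ) x) := by
  induction x using MonoidAlgebra.induction_linear with
  | zero => simp
  | add x y hx hy => rw [map_add, map_add, map_add, hx, hy]
  | single m r =>
    have : (single m r : MonoidAlgebra ℂ G) = r • single m 1 := by
      rw [smul_single, smul_eq_mul, mul_one]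
    rw [this, map_smul, map_smul, ht, MonoidAlgebra.lift_single]
    simp [Algebra.algebraMap_eq_smul_one]

theorem nontriv_case [Finite G] [IsSimpleGroup G] {g h : G} (hgh : g * h ≠ h * g) {q b : ℕ}
    (hq : q.Prime) (hcl : Nat.card {x : G // IsConj g x} = q ^ b) {d : ℕ} (hd : d ≠ 0)
    (f : MonoidAlgebra ℂ G →ₐ[ℂ] Matrix (Fin d) (Fin d) ℂ) (hf : Function.Surjective f)
    (hnt : ¬ ∀ h : G, f (single h 1) = 1) :
    ∃ t : ℂ, IsIntegral ℤ t ∧ (d : ℂ) * (f (single g 1)).trace = q * t := by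
  classical
  have := Fintype.ofFinite G
  set χ := (f (single g 1)).trace with hχ
  let ρ : G →* Matrix (Fin d) (Fin d) ℂ := (f : MonoidAlgebra ℂ G →* _).comp (MonoidAlgebra.of ℂ G)
  have hρ : ∀ x, ρ x = f (single x 1) := fun x => rfl
  have hN : 0 < orderOf g := orderOf_pos g
  have hM : f (single g 1) ^ orderOf g = 1 := by
    rw [← hρ, ← map_pow, pow_orderOf_eq_one, map_one]
  have hχi : IsIntegral ℤ χ := trace_integral _ hN hM
  by_cases hqd : q ∣ d
  · obtain ⟨c, rfl⟩ := hqd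
    refine ⟨(c : ℂ) * χ, ?_, by push_cast; ring⟩
    exact (isIntegral_algebraMap (x := (c : ℤ))).mul hχi
  by_cases hχ0 : χ = 0
  · exact ⟨0, isIntegral_zero, by rw [hχ0]; simp⟩
  exfalso
  obtain ⟨μ, hμi, hμ⟩ := class_integral hd f hf g
  rw [hcl] at hμ
  have hdc : (d : ℂ) ≠ 0 := by exact_mod_cast hd
  have hcop : IsCoprime ((q ^ b : ℕ) : ℤ) (d : ℤ) := by
    rw [Nat.isCoprime_iff_coprime]
    exact Nat.Coprime.pow_left b ((Nat.Prime.coprime_iff_not_dvd hq).2 hqd)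
  obtain ⟨u, v, huv⟩ := hcop
  have huvc : (u : ℂ) * ((q ^ b : ℕ) : ℂ) + v * d = 1 := by exact_mod_cast huv
  have hα : χ / d = u * μ + v * χ := by
    rw [div_eq_iff hdc]
    linear_combination (-χ) * huvc - u * hμ
  have hαi : IsIntegral ℤ (χ / d) := by
    rw [hα]
    exact ((isIntegral_algebraMap (x := u)).mul hμi).add ((isIntegral_algebraMap (x := v)).mul hχi)
  have hsc := scalar_of_integral hd (f (single g 1)) hN hM (χ / d) (by field_simp; rfl) hαi
    (div_ne_zero hχ0 hdc)
  have hker : ρ.ker = ⊥ := by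
    rcases (inferInstance : ρ.ker.Normal).eq_bot_or_eq_top with h1 | h1
    · exact h1
    · exfalso
      apply hnt
      intro x
      have : x ∈ ρ.ker := h1 ▸ Subgroup.mem_top x
      exact this
  have hinj : Function.Injective ρ := (MonoidHom.ker_eq_bot_iff ρ).1 hker
  apply hgh
  apply hinj
  rw [map_mul, map_mul, hρ g, hsc]
  exact Algebra.commutes _ _

theorem class_prime_pow [Finite G] [IsSimpleGroup G] {g : G} (hg : g ≠ 1) {q b : ℕ}
    (hq : q.Prime) (hcl : Nat.card {x : G // IsConj g x} = q ^ b) (h : G) : g * h = h * g := by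
  classical
  have := Fintype.ofFinite G
  by_contra hgh
  obtain ⟨n, d, hd, ⟨e⟩⟩ :=
    IsSemisimpleRing.exists_algEquiv_pi_matrix_of_isAlgClosed ℂ (MonoidAlgebra ℂ G)
  let f : ∀ i, MonoidAlgebra ℂ G →ₐ[ℂ] Matrix (Fin (d i)) (Fin (d i)) ℂ := fun i =>
    (Pi.evalAlgHom ℂ (fun i => Matrix (Fin (d i)) (Fin (d i)) ℂ) i).comp e.toAlgHom
  have hfe : ∀ i x, f i x = e x i := fun i x => rfl
  have hf : ∀ i, Function.Surjective (f i) := by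
    intro i m
    refine ⟨e.symm (Pi.single i m), ?_⟩
    rw [hfe, AlgEquiv.apply_symm_apply, Pi.single_eq_same]
  -- existence of a trivial component
  obtain ⟨i0, hi0⟩ : ∃ i, ∀ h : G, f i (single h 1) = 1 := by
    let s : MonoidAlgebra ℂ G := ∑ x : G, single x 1
    have hl : ∀ h : G, single h (1 : ℂ) * s = s := by
      intro h
      simp only [s, Finset.mul_sum, single_mul_single, mul_one]
      exact Fintype.sum_equiv (Equiv.mulLeft h) _ _ (fun x => rfl)
    have hr : ∀ h : G, s * single h (1 : ℂ) = s := by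
      intro h
      simp only [s, Finset.sum_mul, single_mul_single, mul_one]
      exact Fintype.sum_equiv (Equiv.mulRight h) _ _ (fun x => rfl)
    have hs0 : s ≠ 0 := by
      intro h0
      have h1 := congrArg (MonoidAlgebra.lift ℂ ℂ G (1 : G →* ℂ)) h0
      simp [s, map_sum, MonoidAlgebra.lift_single] at h1
    have hes : e s ≠ 0 := fun h0 => hs0 (by simpa using h0)
    obtain ⟨i, hi⟩ := Function.ne_iff.1 hes
    refine ⟨i, fun h => ?_⟩
    obtain ⟨μ, hμ⟩ := central_scalar (f i) (hf i) s (fun h => by rw [hl, hr])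
    have hμ0 : μ ≠ 0 := by
      rintro rfl
      rw [map_zero] at hμ
      exact hi hμ
    have h1 := congrArg (f i) (hl h)
    rw [map_mul, hμ, Algebra.algebraMap_eq_smul_one, mul_smul_comm, mul_one] at h1
    exact smul_right_injective _ hμ0 h1
  have huniq : ∀ i, i ≠ i0 → ¬ ∀ h : G, f i (single h 1) = 1 := by
    intro i hne ht
    have := hd i
    have := hd i0
    let x := e.symm (Pi.single i 1)
    have h1 : f i x = 1 := by rw [hfe, AlgEquiv.apply_symm_apply, Pi.single_eq_same]
    have h2 : f i0 x = 0 := by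
      rw [hfe, AlgEquiv.apply_symm_apply, Pi.single_eq_of_ne hne.symm]
    rw [triv_scalar (f i) ht] at h1
    rw [triv_scalar (f i0) hi0] at h2
    have h3 := (map_eq_zero_iff _ (FaithfulSMul.algebraMap_injective ℂ _)).1 h2
    rw [h3, map_zero] at h1
    exact zero_ne_one h1
  have hd1 : d i0 = 1 := by
    have hne := (hd i0).out
    by_contra hd1
    have h2 : 1 < d i0 := by omega
    obtain ⟨x, hx⟩ := hf i0 (Matrix.single ⟨0, by omega⟩ ⟨1, h2⟩ 1)
    rw [triv_scalar (f i0) hi0] at hx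
    have := congrFun (congrFun hx ⟨0, by omega⟩) ⟨1, h2⟩
    simp [Matrix.algebraMap_matrix_apply] at this
  have hsum := trace_sum d e g hg
  have hex : ∀ i, i ≠ i0 → ∃ t : ℂ, IsIntegral ℤ t ∧
      (d i : ℂ) * (e (single g 1) i).trace = q * t := fun i hi =>
    nontriv_case hgh hq hcl (hd i).out (f i) (hf i) (huniq i hi)
  choose! t ht1 ht2 using hex
  rw [← Finset.add_sum_erase _ _ (Finset.mem_univ i0)] at hsum
  have h0 : (d i0 : ℂ) * (e (single g 1) i0).trace = 1 := by
    rw [← hfe, hi0, Matrix.trace_one, hd1]; simp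
  rw [h0, Finset.sum_congr rfl (fun i hi => ht2 i (Finset.ne_of_mem_erase hi)),
    ← Finset.mul_sum] at hsum
  exact not_integral_inv hq _
    (IsIntegral.sum _ fun i hi => ht1 i (Finset.ne_of_mem_erase hi)) hsum

theorem simple_case [Finite G] [IsSimpleGroup G]
    (hG : ∀ p : ℕ, p.Prime → p ∣ Nat.card G → p ≤ 3) : Group.IsSolvable G := by
  classical
  have hcard : Nat.card G ≠ 1 := by
    intro h1
    have := (Nat.card_eq_one_iff_unique.1 h1).1
    exact not_subsingleton G this
  obtain ⟨p, hp, hpd⟩ := Nat.exists_prime_and_dvd hcard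
  have hp3 := hG p hp hpd
  have hp2 := hp.two_le
  have : Fact p.Prime := ⟨hp⟩
  obtain ⟨P⟩ : Nonempty (Sylow p G) := inferInstance
  have hPne : (P : Subgroup G) ≠ ⊥ := P.ne_bot_of_dvd_card hpd
  have : Nontrivial P := (Subgroup.nontrivial_iff_ne_bot _).2 hPne
  have hcen := P.2.center_nontrivial
  obtain ⟨⟨z, hz⟩, hz1⟩ := exists_ne (1 : Subgroup.center P)
  have hz1' : (z : G) ≠ 1 := by
    intro h1
    apply hz1
    apply Subtype.ext
    apply Subtype.ext
    exact h1
  have hcl : Nat.card {x : G // IsConj (z : G) x} ∣ (P : Subgroup G).index := by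
    have h1 : ((MulAction.stabilizer (ConjAct G) (z : G)).comap
        (ConjAct.toConjAct : G ≃* ConjAct G).toMonoidHom).index =
        Nat.card {x : G // IsConj (z : G) x} := by
      rw [Subgroup.index_comap_of_surjective _ (ConjAct.toConjAct : G ≃* ConjAct G).surjective,
        MulAction.index_stabilizer, ← Nat.card_coe_set_eq]
      apply Nat.card_congr
      apply Equiv.subtypeEquivRight
      intro x
      rw [ConjAct.mem_orbit_conjAct, isConj_comm]
    rw [← h1]
    apply Subgroup.index_dvd_of_le
    intro x hx
    rw [Subgroup.mem_comap, MulAction.mem_stabilizer_iff]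
    change ConjAct.toConjAct x • (z : G) = z
    rw [ConjAct.toConjAct_smul]
    have h2 : x * z = z * x := congrArg Subtype.val (Subgroup.mem_center_iff.1 hz ⟨x, hx⟩)
    rw [h2, mul_inv_cancel_right]
  have hidx : ¬ p ∣ (P : Subgroup G).index := P.not_dvd_index
  have hq : (5 - p).Prime := by
    have : p = 2 ∨ p = 3 := by omega
    rcases this with rfl | rfl <;> norm_num
  have hpow := Nat.eq_prime_pow_of_unique_prime_dvd (n := Nat.card {x : G // IsConj (z : G) x})
    (p := 5 - p) (by
      have : Nonempty {x : G // IsConj (z : G) x} := ⟨⟨z, IsConj.refl _⟩⟩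
      exact Nat.card_pos.ne') (by
      intro r hr hrd
      have hr1 : r ∣ (P : Subgroup G).index := hrd.trans hcl
      have hr3 := hG r hr (hr1.trans (Subgroup.index_dvd_card _))
      have hr2 := hr.two_le
      have : r ≠ p := by rintro rfl; exact hidx hr1
      omega)
  have hcent : (z : G) ∈ Subgroup.center G := by
    rw [Subgroup.mem_center_iff]
    intro x
    exact (class_prime_pow hz1' hq hpow x).symm
  rcases (inferInstance : (Subgroup.center G).Normal).eq_bot_or_eq_top with h1 | h1
  · rw [h1, Subgroup.mem_bot] at hcent
    exact absurd hcent hz1'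
  · apply Group.isSolvable_of_comm
    intro a b
    have : b ∈ Subgroup.center G := h1 ▸ Subgroup.mem_top b
    exact Subgroup.mem_center_iff.1 this a

theorem burnside_aux : ∀ n : ℕ, ∀ (G : Type u) [Group G] [Finite G], Nat.card G = n →
    (∀ p : ℕ, p.Prime → p ∣ Nat.card G → p ≤ 3) → Group.IsSolvable G := by
  intro n
  induction n using Nat.strong_induction_on with
  | _ n ih =>
    intro G _ _ hn hG
    by_cases hs : IsSimpleGroup G
    · exact simple_case hG
    · rcases subsingleton_or_nontrivial G with h1 | h1
      · exact Group.isSolvable_of_comm (fun a b => Subsingleton.elim _ _)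
      · have : ∃ N : Subgroup G, N.Normal ∧ N ≠ ⊥ ∧ N ≠ ⊤ := by
          by_contra hc
          push Not at hc
          exact hs ⟨fun N hN => by
            by_cases hb : N = ⊥
            · exact Or.inl hb
            · exact Or.inr (hc N hN hb)⟩
        obtain ⟨N, hN, hb, ht⟩ := this
        rw [Group.isSolvable_iff_subgroup_quotient N]
        have hmul := Subgroup.card_eq_card_quotient_mul_card_subgroup N
        have h3 : 1 < Nat.card N := (Subgroup.one_lt_card_iff_ne_bot N).2 hb
        have h4 : 0 < Nat.card (G ⧸ N) := Nat.card_pos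
        constructor
        · refine ih _ ?_ N rfl (fun p hp hd => hG p hp (hd.trans (Subgroup.card_subgroup_dvd_card N)))
          rw [← hn]
          refine lt_of_le_of_ne (Subgroup.card_le_card_group N) ?_
          intro h5
          exact ht (Subgroup.eq_top_of_card_eq N h5)
        · refine ih _ ?_ (G ⧸ N) rfl (fun p hp hd => hG p hp (hd.trans ?_))
          · rw [← hn, hmul]; nlinarith
          · exact ⟨_, hmul⟩

theorem burnside (G : Type u) [Group G] [Finite G]
    (hG : ∀ p : ℕ, p.Prime → p ∣ Nat.card G → p ≤ 3) : Group.IsSolvable G :=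
  burnside_aux _ G rfl hG

end burnside3

end AvgOrd

theorem solvable_of_avgOrder_lt {G : Type*} [Group G] [Fintype G]
    (h : avgOrder G < 211 / 60) : IsSolvable G := by
  have hpos : (0 : ℚ) < (Fintype.card G : ℚ) := by exact_mod_cast Fintype.card_pos
  have h1 : (60 : ℚ) * ∑ x : G, (orderOf x : ℚ) < 211 * (Fintype.card G : ℚ) := by
    unfold avgOrder at h
    rw [div_lt_div_iff₀ hpos (by norm_num)] at h
    linarith
  have h2 : 60 * ∑ x : G, orderOf x < 211 * Nat.card G := by
    rw [Nat.card_eq_fintype_card]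
    exact_mod_cast h1
  exact AvgOrd.main_red (fun G _ _ hG => AvgOrd.burnside G hG) _ G rfl h2
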